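/- arXiv:1301.5442 — 11 statements merged into one kernel-verified Lean document; each statement's English description precedes it below -/
import Mathlib

section
/- Let k be a field, g a Lie algebra over k, V a k-vector space, and let ◁ : V × g → V, ▷ : V × g → g, f : V × V → g, {−,−} : V × V → V be bilinear maps. The unified product bracket on the vector space g × V, defined by [(g,x),(h,y)] = ([g,h] + x ▷ h − y ▷ g + f(x,y), {x,y} + x ◁ h − y ◁ g), is a Lie algebra bracket if and only if the following seven conditions hold for all g, h ∈ g and x, y, z ∈ V: (LE1) f(x,x) = 0 and {x,x} = 0; (LE2) x ◁ [g,h] = (x ◁ g) ◁ h − (x ◁ h) ◁ g; (LE3) x ▷ [g,h] = [x ▷ g, h] + [g, x ▷ h] + (x ◁ g) ▷ h − (x ◁ h) ▷ g; (LE4) {x,y} ◁ g = {x, y ◁ g} + {x ◁ g, y} + x ◁ (y ▷ g) − y ◁ (x ▷ g); (LE5) {x,y} ▷ g = x ▷ (y ▷ g) − y ▷ (x ▷ g) + [g, f(x,y)] + f(x, y ◁ g) + f(x ◁ g, y); (LE6) f(x,{y,z}) + f(y,{z,x}) + f(z,{x,y}) + x ▷ f(y,z) + y ▷ f(z,x)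 + z ▷ f(x,y) = 0; (LE7) {x,{y,z}} + {y,{z,x}} + {z,{x,y}} + x ◁ f(y,z) + y ◁ f(z,x) + z ◁ f(x,y) = 0. -/
/-- A (bilinear) bracket `B` on `L` is a Lie algebra bracket if it is alternating and
satisfies the Jacobi identity. -/
def IsLieBracket {L : Type*} [AddCommGroup L] (B : L → L → L) : Prop :=
  (∀ p, B p p = 0) ∧ ∀ p q r, B p (B q r) + B q (B r p) + B r (B p q) = 0

/-- The unified product bracket on `G × V` associated to an extending datum
`(◁, ▷, f, {-,-}) = (tl, tr, f, br)` of `G` through `V`. -/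
def unifiedBracket {k G V : Type*} [Field k] [LieRing G] [LieAlgebra k G]
    [AddCommGroup V] [Module k V]
    (tl : V →ₗ[k] G →ₗ[k] V) (tr : V →ₗ[k] G →ₗ[k] G)
    (f : V →ₗ[k] V →ₗ[k] G) (br : V →ₗ[k] V →ₗ[k] V) :
    G × V → G × V → G × V :=
  fun p q =>
    (⁅p.1, q.1⁆ + tr p.2 q.1 - tr q.2 p.1 + f p.2 q.2,
     br p.2 q.2 + tl p.2 q.1 - tl q.2 p.1)

/-! The Jacobiator of a bilinear bracket is additive in each argument and invariant under rotation,
so on `G × V` it vanishes as soon as it vanishes on the triples from `GGG`, `VGG`, `VVG` and `VVV`.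
For the unified product the first is the Jacobi identity of `G`, and the two components of the
others are (LE3) and (LE2), (LE5) and (LE4), (LE6) and (LE7). -/

section Jacobiator

variable {R L M N : Type*} [CommSemiring R] [AddCommMonoid L] [Module R L]
  [AddCommMonoid M] [Module R M] [AddCommMonoid N] [Module R N]

/-- The Jacobiator of a bilinear bracket: the cyclic sum whose vanishing is the Jacobi identity. -/
def jacobiator (B : L →ₗ[R] L →ₗ[R] L) (p q r : L) : L :=
  B p (B q r) + B q (B r p) + B r (B p q)

theorem jacobiator_rotate (B : L →ₗ[R] L →ₗ[R] L) (p q r : L) :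
    jacobiator B q r p = jacobiator B p q r := by
  simp only [jacobiator]
  abel

theorem jacobiator_add_left (B : L →ₗ[R] L →ₗ[R] L) (p p' q r : L) :
    jacobiator B (p + p') q r = jacobiator B p q r + jacobiator B p' q r := by
  simp only [jacobiator, map_add, LinearMap.add_apply]
  abel

theorem jacobiator_add_middle (B : L →ₗ[R] L →ₗ[R] L) (p q q' r : L) :
    jacobiator B p (q + q') r = jacobiator B p q r + jacobiator B p q' r := by
  simp only [← jacobiator_rotate B p, jacobiator_add_left]

theorem jacobiator_add_right (B : L →ₗ[R] L →ₗ[R] L) (p q r r' : L) :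
    jacobiator B p q (r + r') = jacobiator B p q r + jacobiator B p q r' := by
  simp only [← jacobiator_rotate B p, jacobiator_add_middle]

theorem forall_jacobiator_prod_eq_zero_iff (B : M × N →ₗ[R] M × N →ₗ[R] M × N) :
    (∀ p q r, jacobiator B p q r = 0) ↔
      (∀ a b c, jacobiator B (a, 0) (b, 0) (c, 0) = 0) ∧
      (∀ x a b, jacobiator B (0, x) (a, 0) (b, 0) = 0) ∧
      (∀ x y a, jacobiator B (0, x) (0, y) (a, 0) = 0) ∧
      (∀ x y z, jacobiator B (0, x) (0, y) (0, z) = 0) := by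
  refine ⟨fun hJ => ⟨fun _ _ _ => hJ _ _ _, fun _ _ _ => hJ _ _ _, fun _ _ _ => hJ _ _ _,
    fun _ _ _ => hJ _ _ _⟩, ?_⟩
  rintro ⟨hMMM, hNMM, hNNM, hNNN⟩ ⟨a, x⟩ ⟨b, y⟩ ⟨c, z⟩
  have hMNM : jacobiator B (a, 0) (0, y) (c, 0) = 0 := by rw [← jacobiator_rotate, hNMM]
  have hMMN : jacobiator B (a, 0) (b, 0) (0, z) = 0 := by rw [jacobiator_rotate, hNMM]
  have hMNN : jacobiator B (a, 0) (0, y) (0, z) = 0 := by rw [← jacobiator_rotate, hNNM]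
  have hNMN : jacobiator B (0, x) (b, 0) (0, z) = 0 := by rw [jacobiator_rotate, hNNM]
  have split (m : M) (n : N) : (m, n) = (m, 0) + (0, n) := by simp
  rw [split a x, split b y, split c z]
  simp only [jacobiator_add_left, jacobiator_add_middle, jacobiator_add_right,
    hMMM, hNMM, hMNM, hMMN, hNNM, hNMN, hMNN, hNNN, add_zero]

end Jacobiator

theorem isLieBracket_prod_iff {R M N : Type*} [CommSemiring R] [AddCommGroup M] [Module R M]
    [AddCommGroup N] [Module R N] (B : M × N →ₗ[R] M × N →ₗ[R] M × N) :
    IsLieBracket (fun p q => B p q) ↔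
      B.IsAlt ∧
      (∀ a b c, jacobiator B (a, 0) (b, 0) (c, 0) = 0) ∧
      (∀ x a b, jacobiator B (0, x) (a, 0) (b, 0) = 0) ∧
      (∀ x y a, jacobiator B (0, x) (0, y) (a, 0) = 0) ∧
      (∀ x y z, jacobiator B (0, x) (0, y) (0, z) = 0) :=
  and_congr_right' (forall_jacobiator_prod_eq_zero_iff B)

section UnifiedProduct

variable {R G V : Type*} [CommRing R] [LieRing G] [LieAlgebra R G] [AddCommGroup V] [Module R V]
  (tl : V →ₗ[R] G →ₗ[R] V) (tr : V →ₗ[R] G →ₗ[R] G)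
  (f : V →ₗ[R] V →ₗ[R] G) (br : V →ₗ[R] V →ₗ[R] V)

/-- The unified product bracket as a bilinear map, over an arbitrary commutative ring of scalars;
over a field its underlying function is `unifiedBracket`. -/
def unifiedBracketBilin : G × V →ₗ[R] G × V →ₗ[R] G × V :=
  LinearMap.mk₂ R
    (fun p q =>
      (⁅p.1, q.1⁆ + tr p.2 q.1 - tr q.2 p.1 + f p.2 q.2,
       br p.2 q.2 + tl p.2 q.1 - tl q.2 p.1))
    (fun p p' q => by
      ext <;> simp only [Prod.fst_add, Prod.snd_add, add_lie, map_add, LinearMap.add_apply] <;>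
        abel)
    (fun c p q => by ext <;> simp [smul_add, smul_sub])
    (fun p q q' => by
      ext <;> simp only [Prod.fst_add, Prod.snd_add, lie_add, map_add, LinearMap.add_apply] <;>
        abel)
    (fun c p q => by ext <;> simp [smul_add, smul_sub])

theorem unifiedBracketBilin_apply (p q : G × V) :
    unifiedBracketBilin tl tr f br p q =
      (⁅p.1, q.1⁆ + tr p.2 q.1 - tr q.2 p.1 + f p.2 q.2,
       br p.2 q.2 + tl p.2 q.1 - tl q.2 p.1) :=
  rfl

theorem unifiedBracketBilin_left_apply (g : G) (q : G × V) :
    unifiedBracketBilin tl tr f br (g, 0) q = (⁅g, q.1⁆ - tr q.2 g, -tl q.2 g) := by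
  simp [unifiedBracketBilin_apply]

theorem unifiedBracketBilin_right_apply (x : V) (q : G × V) :
    unifiedBracketBilin tl tr f br (0, x) q = (tr x q.1 + f x q.2, br x q.2 + tl x q.1) := by
  simp [unifiedBracketBilin_apply]

theorem isAlt_unifiedBracketBilin_iff :
    (unifiedBracketBilin tl tr f br).IsAlt ↔ f.IsAlt ∧ br.IsAlt := by
  have bracket_self (p : G × V) :
      unifiedBracketBilin tl tr f br p p = (f p.2 p.2, br p.2 p.2) := by
    simp [unifiedBracketBilin_apply]
  simp [LinearMap.IsAlt, bracket_self, forall_and]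

theorem jacobiator_unifiedBracketBilin_left_left_left (g h l : G) :
    jacobiator (unifiedBracketBilin tl tr f br) (g, 0) (h, 0) (l, 0) = 0 := by
  simp [jacobiator, unifiedBracketBilin_left_apply, lie_jacobi]

theorem jacobiator_unifiedBracketBilin_right_left_left (x : V) (g h : G) :
    jacobiator (unifiedBracketBilin tl tr f br) (0, x) (g, 0) (h, 0) =
      (tr x ⁅g, h⁆ - (⁅tr x g, h⁆ + ⁅g, tr x h⁆ + tr (tl x g) h - tr (tl x h) g),
       tl x ⁅g, h⁆ - (tl (tl x g) h - tl (tl x h) g)) := by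
  rw [← lie_skew (tr x g) h]
  simp only [jacobiator, unifiedBracketBilin_left_apply, unifiedBracketBilin_right_apply,
    Prod.mk_add_mk, map_zero, map_neg, LinearMap.zero_apply, LinearMap.neg_apply, lie_zero, lie_neg,
    add_zero, zero_add, sub_zero, zero_sub]
  ext <;> dsimp only <;> abel

variable {f br} in
theorem jacobiator_unifiedBracketBilin_right_right_left (hf : f.IsAlt) (hbr : br.IsAlt)
    (x y : V) (g : G) :
    jacobiator (unifiedBracketBilin tl tr f br) (0, x) (0, y) (g, 0) =
      (tr x (tr y g) - tr y (tr x g) + ⁅g, f x y⁆ + f x (tl y g) + f (tl x g) y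
         - tr (br x y) g,
       br x (tl y g) + br (tl x g) y + tl x (tr y g) - tl y (tr x g) - tl (br x y) g) := by
  rw [← hf.neg y (tl x g), ← hbr.neg y (tl x g)]
  simp only [jacobiator, unifiedBracketBilin_left_apply, unifiedBracketBilin_right_apply,
    Prod.mk_add_mk, map_zero, map_neg, lie_zero, zero_sub, zero_add, add_zero]
  ext <;> dsimp only <;> abel

theorem jacobiator_unifiedBracketBilin_right_right_right (x y z : V) :
    jacobiator (unifiedBracketBilin tl tr f br) (0, x) (0, y) (0, z) =
      (f x (br y z) + f y (br z x) + f z (br x y)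
         + tr x (f y z) + tr y (f z x) + tr z (f x y),
       br x (br y z) + br y (br z x) + br z (br x y)
         + tl x (f y z) + tl y (f z x) + tl z (f x y)) := by
  simp only [jacobiator, unifiedBracketBilin_right_apply, Prod.mk_add_mk, map_zero,
    zero_add, add_zero]
  ext <;> dsimp only <;> abel

theorem unifiedBracket_isLieBracket_iff_general :
    IsLieBracket (fun p q => unifiedBracketBilin tl tr f br p q) ↔
      ((∀ x : V, f x x = 0 ∧ br x x = 0) ∧
       (∀ (x : V) (g h : G), tl x ⁅g, h⁆ = tl (tl x g) h - tl (tl x h) g) ∧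
       (∀ (x : V) (g h : G),
          tr x ⁅g, h⁆ = ⁅tr x g, h⁆ + ⁅g, tr x h⁆ + tr (tl x g) h - tr (tl x h) g) ∧
       (∀ (x y : V) (g : G),
          tl (br x y) g = br x (tl y g) + br (tl x g) y + tl x (tr y g) - tl y (tr x g)) ∧
       (∀ (x y : V) (g : G),
          tr (br x y) g = tr x (tr y g) - tr y (tr x g) + ⁅g, f x y⁆
            + f x (tl y g) + f (tl x g) y) ∧
       (∀ x y z : V,
          f x (br y z) + f y (br z x) + f z (br x y)
            + tr x (f y z) + tr y (f z x) + tr z (f x y) = 0) ∧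
       (∀ x y z : V,
          br x (br y z) + br y (br z x) + br z (br x y)
            + tl x (f y z) + tl y (f z x) + tl z (f x y) = 0)) := by
  rw [isLieBracket_prod_iff, isAlt_unifiedBracketBilin_iff, forall_and (p := fun x => f x x = 0)]
  simp only [jacobiator_unifiedBracketBilin_left_left_left,
    jacobiator_unifiedBracketBilin_right_left_left,
    jacobiator_unifiedBracketBilin_right_right_right, Prod.mk_eq_zero, sub_eq_zero, forall_and,
    implies_true, true_and]
  refine and_congr_right fun ⟨hf, hbr⟩ => ?_
  simp only [jacobiator_unifiedBracketBilin_right_right_left tl tr hf hbr, Prod.mk_eq_zero,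
    sub_eq_zero, forall_and, eq_comm (a := tr (br _ _) _), eq_comm (a := tl (br _ _) _)]
  exact ⟨fun ⟨⟨le3, le2⟩, ⟨le5, le4⟩, le67⟩ => ⟨le2, le3, le4, le5, le67⟩,
    fun ⟨le2, le3, le4, le5, le67⟩ => ⟨⟨le3, le2⟩, ⟨le5, le4⟩, le67⟩⟩

end UnifiedProduct

/-- Theorem 2.2: the unified product is a Lie algebra iff (LE1)-(LE7) hold. -/
theorem unifiedBracket_isLieBracket_iff {k G V : Type*} [Field k] [LieRing G]
    [LieAlgebra k G] [AddCommGroup V] [Module k V]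
    (tl : V →ₗ[k] G →ₗ[k] V) (tr : V →ₗ[k] G →ₗ[k] G)
    (f : V →ₗ[k] V →ₗ[k] G) (br : V →ₗ[k] V →ₗ[k] V) :
    IsLieBracket (unifiedBracket tl tr f br) ↔
      ((∀ x : V, f x x = 0 ∧ br x x = 0) ∧
       (∀ (x : V) (g h : G), tl x ⁅g, h⁆ = tl (tl x g) h - tl (tl x h) g) ∧
       (∀ (x : V) (g h : G),
          tr x ⁅g, h⁆ = ⁅tr x g, h⁆ + ⁅g, tr x h⁆ + tr (tl x g) h - tr (tl x h) g) ∧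
       (∀ (x y : V) (g : G),
          tl (br x y) g = br x (tl y g) + br (tl x g) y + tl x (tr y g) - tl y (tr x g)) ∧
       (∀ (x y : V) (g : G),
          tr (br x y) g = tr x (tr y g) - tr y (tr x g) + ⁅g, f x y⁆
            + f x (tl y g) + f (tl x g) y) ∧
       (∀ x y z : V,
          f x (br y z) + f y (br z x) + f z (br x y)
            + tr x (f y z) + tr y (f z x) + tr z (f x y) = 0) ∧
       (∀ x y z : V,
          br x (br y z) + br y (br z x) + br z (br x y)
            + tl x (f y z) + tl y (f z x) + tl z (f x y) = 0)) :=
  unifiedBracket_isLieBracket_iff_general tl tr f br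
end

section
/- Let k be a field, g a Lie algebra over k, E a Lie algebra over k containing g as a Lie subalgebra, and p : E → g a k-linear retraction (p(g) = g for all g ∈ g). Set V := ker p and define bilinear maps by x ▷ g := p([x,g]), x ◁ g := [x,g] − p([x,g]), f(x,y) := p([x,y]) and {x,y} := [x,y] − p([x,y]) for all g ∈ g, x, y ∈ V (these take values in g and V respectively). Then the unified product bracket on g × V associated to (◁, ▷, f, {−,−}) is a Lie algebra bracket, and the map φ : g × V → E, φ(g,x) := g + x, is an isomorphism of Lie algebras from this unified product to E which stabilizes g (i.e. φ(g,0) = g for all g ∈ g) and co-stabilizes V (i.e. the V-component of φ⁻¹(e) is e − p(e) for all e ∈ E, equivalently the canonical projections onto V commute with φ). -/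
/-- The unified product bracket on `G × ker p` induced by a linear retraction
`p : E → G` of the inclusion `ι : G → E`, where `x ▷ g = p[x, g]`,
`x ◁ g = [x,g] - p[x,g]`, `f(x,y) = p[x,y]` and `{x,y} = [x,y] - p[x,y]`. -/
def retractionBracket {k G E : Type*} [Field k] [LieRing G] [LieAlgebra k G]
    [LieRing E] [LieAlgebra k E] (ι : G →ₗ⁅k⁆ E) (p : E →ₗ[k] G)
    (hp : ∀ a : G, p (ι a) = a) :
    G × LinearMap.ker p → G × LinearMap.ker p → G × LinearMap.ker p :=
  fun u w =>
    (⁅u.1, w.1⁆ + p ⁅(u.2 : E), ι w.1⁆ - p ⁅(w.2 : E), ι u.1⁆ + p ⁅(u.2 : E), (w.2 : E)⁆,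
     ⟨(⁅(u.2 : E), (w.2 : E)⁆ - ι (p ⁅(u.2 : E), (w.2 : E)⁆))
        + (⁅(u.2 : E), ι w.1⁆ - ι (p ⁅(u.2 : E), ι w.1⁆))
        - (⁅(w.2 : E), ι u.1⁆ - ι (p ⁅(w.2 : E), ι u.1⁆)),
      by simp [LinearMap.mem_ker, hp]⟩)

/-!
The linear isomorphism `(g, x) ↦ ι g + x` from `G × ker p` onto `E` carries the unified product
bracket to the bracket of `E`: when `⁅ι g + x, ι h + y⁆` is expanded, each term but `⁅ι g, ι h⁆` is
the sum of its `p`-part in `G` and the remainder in `ker p`. The Lie algebra axioms for the unified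
product are therefore pulled back from `E`, with no computation on the extending datum.
-/

theorem IsLieBracket.of_injective {M L : Type*} [AddCommGroup M] [LieRing L] {B : M → M → M}
    (f : M →+ L) (hf : Function.Injective f) (hB : ∀ u w, f (B u w) = ⁅f u, f w⁆) :
    IsLieBracket B := by
  constructor
  · intro u
    apply hf
    rw [hB, lie_self, map_zero]
  · intro u v w
    apply hf
    simp only [map_add, hB, map_zero]
    exact lie_jacobi (f u) (f v) (f w)

section Splitting

variable {R M N : Type*} [Semiring R] [AddCommGroup M] [AddCommGroup N] [Module R M] [Module R N]
  (i : M →ₗ[R] N) (p : N →ₗ[R] M) (hp : ∀ a, p (i a) = a)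

/-- The splitting `M × ker p ≃ N`, `(a, x) ↦ i a + x`, of a module `N` along a linear retraction
`p` of `i : M → N`. Its inverse is `e ↦ (p e, e - i (p e))`. -/
def retractionSplitting : (M × LinearMap.ker p) ≃ₗ[R] N :=
  LinearEquiv.ofLinearMap
    (i.coprod (LinearMap.ker p).subtype)
    (p.prod ((LinearMap.id - i ∘ₗ p).codRestrict (LinearMap.ker p) fun e => by simp [hp]))
    (by ext e; simp)
    (by ext <;> simp [hp])

theorem retractionSplitting_apply (u : M × LinearMap.ker p) :
    retractionSplitting i p hp u = i u.1 + (u.2 : N) :=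
  rfl

theorem retractionSplitting_mk_zero (a : M) : retractionSplitting i p hp (a, 0) = i a := by
  simp [retractionSplitting_apply]

theorem retractionSplitting_sub_retraction (u : M × LinearMap.ker p) :
    retractionSplitting i p hp u - i (p (retractionSplitting i p hp u)) = u.2 :=
  congrArg (fun w : M × LinearMap.ker p => (w.2 : N))
    ((retractionSplitting i p hp).symm_apply_apply u)

end Splitting

section Bracket

variable {k G E : Type*} [Field k] [LieRing G] [LieAlgebra k G] [LieRing E] [LieAlgebra k E]
  (ι : G →ₗ⁅k⁆ E) (p : E →ₗ[k] G) (hp : ∀ a, p (ι a) = a)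

theorem retractionSplitting_retractionBracket (u w : G × LinearMap.ker p) :
    retractionSplitting (ι : G →ₗ[k] E) p hp (retractionBracket ι p hp u w) =
      ⁅retractionSplitting (ι : G →ₗ[k] E) p hp u,
        retractionSplitting (ι : G →ₗ[k] E) p hp w⁆ := by
  obtain ⟨g, x⟩ := u
  obtain ⟨h, y⟩ := w
  have expand : ⁅ι g + (x : E), ι h + (y : E)⁆ =
      ⁅ι g, ι h⁆ + ⁅(x : E), ι h⁆ - ⁅(y : E), ι g⁆ + ⁅(x : E), (y : E)⁆ := by
    rw [add_lie, lie_add, lie_add, ← lie_skew (ι g) (y : E)]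
    abel
  simp only [retractionSplitting_apply, retractionBracket, LieHom.coe_toLinearMap, expand,
    map_add, map_sub, LieHom.map_lie]
  abel

theorem isLieBracket_retractionBracket : IsLieBracket (retractionBracket ι p hp) :=
  .of_injective (retractionSplitting (ι : G →ₗ[k] E) p hp).toAddEquiv.toAddMonoidHom
    (retractionSplitting (ι : G →ₗ[k] E) p hp).injective
    (retractionSplitting_retractionBracket ι p hp)

end Bracket

/-- Theorem 2.3: any Lie algebra `E` containing `G` as a Lie subalgebra is isomorphic,
via `φ(g,x) = g + x`, to the unified product of `G` with `V = ker p` associated to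
the canonical extending datum induced by a linear retraction `p : E → G`; the
isomorphism stabilizes `G` and co-stabilizes `V`. -/
theorem lie_algebra_containing_iso_unified_product {k G E : Type*} [Field k]
    [LieRing G] [LieAlgebra k G] [LieRing E] [LieAlgebra k E]
    (ι : G →ₗ⁅k⁆ E) (hι : Function.Injective ι)
    (p : E →ₗ[k] G) (hp : ∀ a : G, p (ι a) = a) :
    IsLieBracket (retractionBracket ι p hp) ∧
    ∃ φ : G × LinearMap.ker p → E,
      (∀ u : G × LinearMap.ker p, φ u = ι u.1 + (u.2 : E)) ∧
      (∀ u w : G × LinearMap.ker p, φ (retractionBracket ι p hp u w) = ⁅φ u, φ w⁆) ∧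
      Function.Bijective φ ∧
      (∀ a : G, φ (a, 0) = ι a) ∧
      (∀ u : G × LinearMap.ker p, φ u - ι (p (φ u)) = (u.2 : E)) := by
  exact ⟨isLieBracket_retractionBracket ι p hp,
    retractionSplitting (ι : G →ₗ[k] E) p hp,
    retractionSplitting_apply _ p hp,
    retractionSplitting_retractionBracket ι p hp,
    (retractionSplitting (ι : G →ₗ[k] E) p hp).bijective,
    retractionSplitting_mk_zero _ p hp,
    retractionSplitting_sub_retraction _ p hp⟩
end

section
/- Let k be a field, g a Lie algebra over k, V a k-vector space, and let Ω = (◁, ▷, f, {−,−}) and Ω' = (◁', ▷', f', {−,−}') be two Lie extending structures of g through V, with associated unified products g ⋈ V and g ⋈' V. For k-linear maps r : V → g and v : V → V, the linear map ψ : g × V → g × V defined by ψ(g,x) := (g + r(x), v(x)) is a morphism of Lie algebras from g ⋈ V to g ⋈' V if and only if for all g ∈ g and x, y ∈ V: (ML1) v(x) ◁' g = v(x ◁ g); (ML2) r(x ◁ g) = [r(x), g] − x ▷ g + v(x) ▷' g; (ML3) v({x,y}) = {v(x),v(y)}' + v(x) ◁' r(y) − v(y) ◁' r(x); (ML4) r({x,y})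 = [r(x), r(y)] + v(x) ▷' r(y) − v(y) ▷' r(x) + f'(v(x),v(y)) − f(x,y). -/
/-!
A biadditive identity on `G × V` may be checked on the summands. On `G × G` compatibility with the
brackets is automatic; on `V × G` its two components are (ML1) and (ML2); on `V × V` they are (ML3)
and (ML4). The remaining case `G × V` reduces to `V × G`, because bracketing with an element of `G`
is skew-symmetric for any choice of the bilinear maps.
-/

section UnifiedProduct

variable {k G V : Type*} [Field k] [LieRing G] [LieAlgebra k G] [AddCommGroup V] [Module k V]
  (tl : V →ₗ[k] G →ₗ[k] V) (tr : V →ₗ[k] G →ₗ[k] G)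
  (f : V →ₗ[k] V →ₗ[k] G) (br : V →ₗ[k] V →ₗ[k] V)

theorem unifiedBracket_add_left (p p' q : G × V) :
    unifiedBracket tl tr f br (p + p') q =
      unifiedBracket tl tr f br p q + unifiedBracket tl tr f br p' q := by
  ext <;> simp only [unifiedBracket, Prod.fst_add, Prod.snd_add, map_add, LinearMap.add_apply,
    add_lie] <;> abel

theorem unifiedBracket_add_right (p q q' : G × V) :
    unifiedBracket tl tr f br p (q + q') =
      unifiedBracket tl tr f br p q + unifiedBracket tl tr f br p q' := by
  ext <;> simp only [unifiedBracket, Prod.fst_add, Prod.snd_add, map_add, LinearMap.add_apply,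
    lie_add] <;> abel

theorem unifiedBracket_inl_inl (g h : G) :
    unifiedBracket tl tr f br (g, 0) (h, 0) = (⁅g, h⁆, 0) := by
  simp [unifiedBracket]

theorem unifiedBracket_inl_right (p : G × V) (g : G) :
    unifiedBracket tl tr f br p (g, 0) = (⁅p.1, g⁆ + tr p.2 g, tl p.2 g) := by
  simp [unifiedBracket]

theorem unifiedBracket_inr_inr (x y : V) :
    unifiedBracket tl tr f br (0, x) (0, y) = (f x y, br x y) := by
  simp [unifiedBracket]

theorem unifiedBracket_inl_left (g : G) (p : G × V) :
    unifiedBracket tl tr f br (g, 0) p = -unifiedBracket tl tr f br p (g, 0) := by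
  ext
  · rw [unifiedBracket_inl_right, Prod.fst_neg, neg_add, lie_skew]
    simp [unifiedBracket, sub_eq_add_neg]
  · simp [unifiedBracket]

end UnifiedProduct

section TriangularMap

variable {k G H V W : Type*} [Field k] [LieRing G] [LieAlgebra k G] [LieRing H] [LieAlgebra k H]
  [AddCommGroup V] [Module k V] [AddCommGroup W] [Module k W]

/-- The linear map `(g, x) ↦ (φ g + r x, v x)`, the general linear map `G × V → H × W` restricting
to a Lie algebra morphism `φ : G → H`. The map `ψ` of the paper is the case `φ = id`. -/
def triangularMap (φ : G →ₗ⁅k⁆ H) (r : V →ₗ[k] H) (v : V →ₗ[k] W) : G × V →ₗ[k] H × W :=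
  ((φ : G →ₗ[k] H).coprod r).prod (v ∘ₗ LinearMap.snd k G V)

variable (tl : V →ₗ[k] G →ₗ[k] V) (tr : V →ₗ[k] G →ₗ[k] G)
  (f : V →ₗ[k] V →ₗ[k] G) (br : V →ₗ[k] V →ₗ[k] V)
  (tl' : W →ₗ[k] H →ₗ[k] W) (tr' : W →ₗ[k] H →ₗ[k] H)
  (f' : W →ₗ[k] W →ₗ[k] H) (br' : W →ₗ[k] W →ₗ[k] W)
  (φ : G →ₗ⁅k⁆ H) (r : V →ₗ[k] H) (v : V →ₗ[k] W)

theorem triangularMap_apply (g : G) (x : V) : triangularMap φ r v (g, x) = (φ g + r x, v x) :=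
  rfl

theorem triangularMap_inl (g : G) : triangularMap φ r v (g, 0) = (φ g, 0) := by
  simp [triangularMap_apply]

theorem triangularMap_inr (x : V) : triangularMap φ r v (0, x) = (r x, v x) := by
  simp [triangularMap_apply]

theorem triangularMap_unifiedBracket_inl_inl (g h : G) :
    triangularMap φ r v (unifiedBracket tl tr f br (g, 0) (h, 0)) =
      unifiedBracket tl' tr' f' br' (triangularMap φ r v (g, 0)) (triangularMap φ r v (h, 0)) := by
  simp only [unifiedBracket_inl_inl, triangularMap_inl, LieHom.map_lie]

theorem triangularMap_unifiedBracket_inr_inl_iff (x : V) (g : G) :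
    triangularMap φ r v (unifiedBracket tl tr f br (0, x) (g, 0)) =
        unifiedBracket tl' tr' f' br' (triangularMap φ r v (0, x)) (triangularMap φ r v (g, 0)) ↔
      tl' (v x) (φ g) = v (tl x g) ∧
        r (tl x g) = ⁅r x, φ g⁆ - φ (tr x g) + tr' (v x) (φ g) := by
  rw [triangularMap_inl, triangularMap_inr, unifiedBracket_inl_right, unifiedBracket_inl_right,
    triangularMap_apply, zero_lie, zero_add, Prod.mk.injEq, and_comm, sub_add_eq_add_sub,
    eq_sub_iff_add_eq', eq_comm (a := v (tl x g))]

theorem triangularMap_unifiedBracket_inl_inr_iff (x : V) (g : G) :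
    triangularMap φ r v (unifiedBracket tl tr f br (g, 0) (0, x)) =
        unifiedBracket tl' tr' f' br' (triangularMap φ r v (g, 0)) (triangularMap φ r v (0, x)) ↔
      triangularMap φ r v (unifiedBracket tl tr f br (0, x) (g, 0)) =
        unifiedBracket tl' tr' f' br' (triangularMap φ r v (0, x))
          (triangularMap φ r v (g, 0)) := by
  rw [triangularMap_inl, unifiedBracket_inl_left, unifiedBracket_inl_left, map_neg, neg_inj]

theorem triangularMap_unifiedBracket_inr_inr_iff (x y : V) :
    triangularMap φ r v (unifiedBracket tl tr f br (0, x) (0, y)) =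
        unifiedBracket tl' tr' f' br' (triangularMap φ r v (0, x)) (triangularMap φ r v (0, y)) ↔
      v (br x y) = br' (v x) (v y) + tl' (v x) (r y) - tl' (v y) (r x) ∧
        r (br x y) = ⁅r x, r y⁆ + tr' (v x) (r y) - tr' (v y) (r x)
          + f' (v x) (v y) - φ (f x y) := by
  rw [unifiedBracket_inr_inr, triangularMap_inr, triangularMap_inr, triangularMap_apply,
    unifiedBracket, Prod.mk.injEq, and_comm, eq_sub_iff_add_eq' (a := r (br x y))]

theorem triangularMap_unifiedBracket_iff_on_summands :
    (∀ p q : G × V, triangularMap φ r v (unifiedBracket tl tr f br p q) =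
        unifiedBracket tl' tr' f' br' (triangularMap φ r v p) (triangularMap φ r v q)) ↔
      (∀ (x : V) (g : G), triangularMap φ r v (unifiedBracket tl tr f br (0, x) (g, 0)) =
        unifiedBracket tl' tr' f' br' (triangularMap φ r v (0, x))
          (triangularMap φ r v (g, 0))) ∧
      (∀ x y : V, triangularMap φ r v (unifiedBracket tl tr f br (0, x) (0, y)) =
        unifiedBracket tl' tr' f' br' (triangularMap φ r v (0, x))
          (triangularMap φ r v (0, y))) := by
  refine ⟨fun h => ⟨fun x g => h (0, x) (g, 0), fun x y => h (0, x) (0, y)⟩, ?_⟩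
  rintro ⟨inr_inl, inr_inr⟩ ⟨g, x⟩ ⟨h, y⟩
  have inl_inl := triangularMap_unifiedBracket_inl_inl tl tr f br tl' tr' f' br' φ r v g h
  have inl_inr := (triangularMap_unifiedBracket_inl_inr_iff tl tr f br tl' tr' f' br' φ r v y g).2
    (inr_inl y g)
  rw [← Prod.fst_add_snd (g, x), ← Prod.fst_add_snd (h, y)]
  simp only [unifiedBracket_add_left, unifiedBracket_add_right, map_add, inl_inl, inl_inr, inr_inl,
    inr_inr]

theorem morphism_unified_iff_general :
    (∀ p q : G × V, triangularMap φ r v (unifiedBracket tl tr f br p q) =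
        unifiedBracket tl' tr' f' br' (triangularMap φ r v p) (triangularMap φ r v q)) ↔
      ((∀ (x : V) (g : G), tl' (v x) (φ g) = v (tl x g)) ∧
       (∀ (x : V) (g : G), r (tl x g) = ⁅r x, φ g⁆ - φ (tr x g) + tr' (v x) (φ g)) ∧
       (∀ x y : V, v (br x y) = br' (v x) (v y) + tl' (v x) (r y) - tl' (v y) (r x)) ∧
       (∀ x y : V, r (br x y) = ⁅r x, r y⁆ + tr' (v x) (r y) - tr' (v y) (r x)
          + f' (v x) (v y) - φ (f x y))) := by
  simp only [triangularMap_unifiedBracket_iff_on_summands,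
    triangularMap_unifiedBracket_inr_inl_iff, triangularMap_unifiedBracket_inr_inr_iff,
    forall_and, and_assoc]

end TriangularMap

/-- Lemma 2.4: `ψ(g,x) = (g + r(x), v(x))` is a morphism of Lie algebras between
two unified products iff (ML1)-(ML4) hold. -/
theorem morphism_unified_iff {k G V : Type*} [Field k] [LieRing G] [LieAlgebra k G]
    [AddCommGroup V] [Module k V]
    (tl : V →ₗ[k] G →ₗ[k] V) (tr : V →ₗ[k] G →ₗ[k] G)
    (f : V →ₗ[k] V →ₗ[k] G) (br : V →ₗ[k] V →ₗ[k] V)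
    (tl' : V →ₗ[k] G →ₗ[k] V) (tr' : V →ₗ[k] G →ₗ[k] G)
    (f' : V →ₗ[k] V →ₗ[k] G) (br' : V →ₗ[k] V →ₗ[k] V)
    (hΩ : IsLieBracket (unifiedBracket tl tr f br))
    (hΩ' : IsLieBracket (unifiedBracket tl' tr' f' br'))
    (r : V →ₗ[k] G) (v : V →ₗ[k] V) :
    (∀ u w : G × V,
        ((unifiedBracket tl tr f br u w).1 + r (unifiedBracket tl tr f br u w).2,
          v (unifiedBracket tl tr f br u w).2) =
        unifiedBracket tl' tr' f' br' (u.1 + r u.2, v u.2) (w.1 + r w.2, v w.2)) ↔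
      ((∀ (x : V) (g : G), tl' (v x) g = v (tl x g)) ∧
       (∀ (x : V) (g : G), r (tl x g) = ⁅r x, g⁆ - tr x g + tr' (v x) g) ∧
       (∀ x y : V, v (br x y) = br' (v x) (v y) + tl' (v x) (r y) - tl' (v y) (r x)) ∧
       (∀ x y : V, r (br x y) = ⁅r x, r y⁆ + tr' (v x) (r y) - tr' (v y) (r x)
          + f' (v x) (v y) - f x y)) :=
  morphism_unified_iff_general tl tr f br tl' tr' f' br' LieHom.id r v
end

section
/- Let k be a field, g a Lie algebra over k, V a k-vector space, and let Ω = (◁, ▷, f, {−,−}) and Ω' = (◁', ▷', f', {−,−}') be two Lie extending structures of g through V. There exists an isomorphism of Lie algebras ψ : g ⋈ V → g ⋈' V between the associated unified products which stabilizes g (ψ(g,0) = (g,0) for all g ∈ g) if and only if there exist a linear map r : V → g and a linear automorphism v of V such that for all g ∈ g and x, y ∈ V: x ◁' g = v(v⁻¹(x) ◁ g); x ▷' g = r(v⁻¹(x) ◁ g) + v⁻¹(x) ▷ g + [g, r(v⁻¹(x))]; f'(x,y) = f(v⁻¹(x),v⁻¹(y)) + r({v⁻¹(x),v⁻¹(y)})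 + [r(v⁻¹(x)), r(v⁻¹(y))] − r(v⁻¹(x) ◁ r(v⁻¹(y))) − v⁻¹(x) ▷ r(v⁻¹(y)) + r(v⁻¹(y) ◁ r(v⁻¹(x))) + v⁻¹(y) ▷ r(v⁻¹(x)); and {x,y}' = v({v⁻¹(x),v⁻¹(y)}) − v(v⁻¹(x) ◁ r(v⁻¹(y))) + v(v⁻¹(y) ◁ r(v⁻¹(x))). -/
/-!
A linear map `G × V → G × W` fixing `G` pointwise has the form `(g, x) ↦ (g + r x, v x)`, and it is
bijective exactly when `v` is. By bilinearity, preservation of the brackets only has to be tested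
on pairs `(0, x), (g, 0)` and `(0, x), (0, y)`; the resulting four identities, solved for the
operations of the target and transported along `v`, are the formulas defining equivalence.
-/

section StabilizingMap

variable {k G V W : Type*} [Semiring k] [AddCommMonoid V] [Module k V] [AddCommMonoid W]
  [Module k W]

/-- The linear map `(g, x) ↦ (g + r x, v x)`, the general form of a linear map `G × V → G × W`
which restricts to the identity on `G`. -/
def stabilizingMap [AddCommMonoid G] [Module k G] (r : V →ₗ[k] G) (v : V →ₗ[k] W) :
    G × V →ₗ[k] G × W :=
  (LinearMap.inl k G W).coprod (r.prod v)

@[simp]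
theorem stabilizingMap_apply [AddCommMonoid G] [Module k G] (r : V →ₗ[k] G) (v : V →ₗ[k] W)
    (p : G × V) : stabilizingMap r v p = (p.1 + r p.2, v p.2) := by
  simp [stabilizingMap]

theorem exists_eq_stabilizingMap [AddCommMonoid G] [Module k G] {ψ : G × V →ₗ[k] G × W}
    (hψ : ∀ a : G, ψ (a, 0) = (a, 0)) :
    ∃ (r : V →ₗ[k] G) (v : V →ₗ[k] W), ψ = stabilizingMap r v := by
  refine ⟨.fst k G W ∘ₗ ψ ∘ₗ .inr k G V, .snd k G W ∘ₗ ψ ∘ₗ .inr k G V, ?_⟩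
  ext <;> simp [hψ]

theorem bijective_stabilizingMap_iff [AddCommGroup G] [Module k G] {r : V →ₗ[k] G}
    {v : V →ₗ[k] W} : Function.Bijective (stabilizingMap r v) ↔ Function.Bijective v := by
  have map_graph (x : V) : stabilizingMap r v (-r x, x) = (0, v x) := by simp
  constructor
  · rintro ⟨hinj, hsurj⟩
    refine ⟨fun x y hxy => ?_, fun w => ?_⟩
    · exact congrArg Prod.snd (@hinj (-r x, x) (-r y, y) (by rw [map_graph, map_graph, hxy]))
    · obtain ⟨p, hp⟩ := hsurj (0, w)
      exact ⟨p.2, by simpa using congrArg Prod.snd hp⟩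
  · rintro ⟨hinj, hsurj⟩
    refine ⟨fun p q hpq => ?_, fun ⟨g, w⟩ => ?_⟩
    · simp only [stabilizingMap_apply, Prod.mk.injEq] at hpq
      have hsnd : p.2 = q.2 := hinj hpq.2
      exact Prod.ext (by simpa [hsnd] using hpq.1) hsnd
    · obtain ⟨x, rfl⟩ := hsurj w
      exact ⟨(g - r x, x), by simp⟩

end StabilizingMap

/-- An extending datum of `G` through `V`: four bilinear maps subject to no axioms. In the notation
of the literature `tl` is `◁`, `tr` is `▷` and `br` is `{−, −}`. It is a Lie extending structure
when its unified product bracket is a Lie bracket. -/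
structure ExtendingDatum (k G V : Type*) [Field k] [LieRing G] [LieAlgebra k G] [AddCommGroup V]
    [Module k V] where
  tl : V →ₗ[k] G →ₗ[k] V
  tr : V →ₗ[k] G →ₗ[k] G
  f : V →ₗ[k] V →ₗ[k] G
  br : V →ₗ[k] V →ₗ[k] V

namespace ExtendingDatum

variable {k G V W : Type*} [Field k] [LieRing G] [LieAlgebra k G] [AddCommGroup V] [Module k V]
  [AddCommGroup W] [Module k W]

/-- The bracket of the unified product attached to an extending datum. -/
def bracket (Ω : ExtendingDatum k G V) : G × V → G × V → G × V :=
  unifiedBracket Ω.tl Ω.tr Ω.f Ω.br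

theorem bracket_mk (Ω : ExtendingDatum k G V) (g h : G) (x y : V) :
    Ω.bracket (g, x) (h, y) =
      (⁅g, h⁆ + Ω.tr x h - Ω.tr y g + Ω.f x y, Ω.br x y + Ω.tl x h - Ω.tl y g) :=
  rfl

/-- The compatibility conditions on a pair `(r, v)` under which `stabilizingMap r v` is a morphism
of unified products. -/
structure IsMorphismPair (Ω : ExtendingDatum k G V) (Ω' : ExtendingDatum k G W) (r : V →ₗ[k] G)
    (v : V →ₗ[k] W) : Prop where
  map_tl (x : V) (g : G) : v (Ω.tl x g) = Ω'.tl (v x) g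
  map_tr (x : V) (g : G) : Ω.tr x g + r (Ω.tl x g) = ⁅r x, g⁆ + Ω'.tr (v x) g
  map_f (x y : V) : Ω.f x y + r (Ω.br x y) =
    ⁅r x, r y⁆ + Ω'.tr (v x) (r y) - Ω'.tr (v y) (r x) + Ω'.f (v x) (v y)
  map_br (x y : V) : v (Ω.br x y) =
    Ω'.br (v x) (v y) + Ω'.tl (v x) (r y) - Ω'.tl (v y) (r x)

/-- The pair `(r, v)` exhibits `Ω` and `Ω'` as equivalent: the operations of `Ω'` are those of `Ω`
transported along `v` and twisted by `r`. The two spaces `V` and `W` need not coincide. -/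
def IsEquivalence (Ω : ExtendingDatum k G V) (Ω' : ExtendingDatum k G W) (r : V →ₗ[k] G)
    (v : V ≃ₗ[k] W) : Prop :=
  (∀ (x : W) (g : G), Ω'.tl x g = v (Ω.tl (v.symm x) g)) ∧
  (∀ (x : W) (g : G),
    Ω'.tr x g = r (Ω.tl (v.symm x) g) + Ω.tr (v.symm x) g + ⁅g, r (v.symm x)⁆) ∧
  (∀ x y : W,
    Ω'.f x y = Ω.f (v.symm x) (v.symm y) + r (Ω.br (v.symm x) (v.symm y))
      + ⁅r (v.symm x), r (v.symm y)⁆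
      - r (Ω.tl (v.symm x) (r (v.symm y))) - Ω.tr (v.symm x) (r (v.symm y))
      + r (Ω.tl (v.symm y) (r (v.symm x))) + Ω.tr (v.symm y) (r (v.symm x))) ∧
  (∀ x y : W,
    Ω'.br x y = v (Ω.br (v.symm x) (v.symm y))
      - v (Ω.tl (v.symm x) (r (v.symm y))) + v (Ω.tl (v.symm y) (r (v.symm x))))

variable {Ω : ExtendingDatum k G V} {Ω' : ExtendingDatum k G W} {r : V →ₗ[k] G}

theorem IsMorphismPair.of_stabilizingMap_bracket {v : V →ₗ[k] W}
    (h : ∀ p q, stabilizingMap r v (Ω.bracket p q) =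
      Ω'.bracket (stabilizingMap r v p) (stabilizingMap r v q)) :
    Ω.IsMorphismPair Ω' r v := by
  have map_mixed (x : V) (g : G) : Ω.tr x g + r (Ω.tl x g) = ⁅r x, g⁆ + Ω'.tr (v x) g ∧
      v (Ω.tl x g) = Ω'.tl (v x) g := by
    simpa [bracket_mk] using h (0, x) (g, 0)
  have map_inr (x y : V) : Ω.f x y + r (Ω.br x y) =
        ⁅r x, r y⁆ + Ω'.tr (v x) (r y) - Ω'.tr (v y) (r x) + Ω'.f (v x) (v y) ∧
      v (Ω.br x y) = Ω'.br (v x) (v y) + Ω'.tl (v x) (r y) - Ω'.tl (v y) (r x) := by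
    simpa [bracket_mk] using h (0, x) (0, y)
  exact ⟨fun x g => (map_mixed x g).2, fun x g => (map_mixed x g).1, fun x y => (map_inr x y).1,
    fun x y => (map_inr x y).2⟩

theorem IsMorphismPair.stabilizingMap_bracket {v : V →ₗ[k] W} (h : Ω.IsMorphismPair Ω' r v)
    (p q : G × V) : stabilizingMap r v (Ω.bracket p q) =
      Ω'.bracket (stabilizingMap r v p) (stabilizingMap r v q) := by
  obtain ⟨a, x⟩ := p
  obtain ⟨b, y⟩ := q
  simp only [bracket_mk, stabilizingMap_apply, map_add, map_sub, add_lie, lie_add, Prod.mk.injEq]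
  constructor
  · have skew : ⁅a, r y⁆ = -⁅r y, a⁆ := (lie_skew _ _).symm
    linear_combination (norm := abel) h.map_tr x b - h.map_tr y a + h.map_f x y - skew
  · linear_combination (norm := abel) h.map_tl x b - h.map_tl y a + h.map_br x y

theorem isEquivalence_iff_isMorphismPair {v : V ≃ₗ[k] W} :
    Ω.IsEquivalence Ω' r v ↔ Ω.IsMorphismPair Ω' r v := by
  simp only [IsEquivalence, v.surjective.forall, LinearEquiv.symm_apply_apply]
  constructor
  · rintro ⟨htl, htr, hf, hbr⟩
    refine ⟨fun x g => ?_, fun x g => ?_, fun x y => ?_, fun x y => ?_⟩ <;>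
      simp only [LinearEquiv.coe_coe, htl, htr, hf, hbr]
    · rw [← lie_skew g (r x)]
      abel
    · rw [← lie_skew (r x) (r y)]
      abel
    · abel
  · intro h
    have htl (x : V) (g : G) : Ω'.tl (v x) g = v (Ω.tl x g) := (h.map_tl x g).symm
    have htr (x : V) (g : G) : Ω'.tr (v x) g = r (Ω.tl x g) + Ω.tr x g + ⁅g, r x⁆ := by
      have hmap : Ω.tr x g + r (Ω.tl x g) = ⁅r x, g⁆ + Ω'.tr (v x) g := h.map_tr x g
      rw [← lie_skew g (r x)]
      linear_combination (norm := abel) -hmap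
    refine ⟨htl, htr, fun x y => ?_, fun x y => ?_⟩
    · have hf := h.map_f x y
      simp only [LinearEquiv.coe_coe, htr, ← lie_skew (r x) (r y)] at hf ⊢
      linear_combination (norm := abel) -hf
    · have hbr := h.map_br x y
      simp only [LinearEquiv.coe_coe, htl] at hbr
      linear_combination (norm := abel) -hbr

end ExtendingDatum

theorem isomorphic_stab_iff_equivalent_general {k G V W : Type*} [Field k] [LieRing G]
    [LieAlgebra k G] [AddCommGroup V] [Module k V] [AddCommGroup W] [Module k W]
    (Ω : ExtendingDatum k G V) (Ω' : ExtendingDatum k G W) :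
    (∃ ψ : (G × V) ≃ₗ[k] G × W,
        (∀ u w : G × V, ψ (Ω.bracket u w) = Ω'.bracket (ψ u) (ψ w)) ∧
        ∀ a : G, ψ (a, 0) = (a, 0)) ↔
      ∃ (r : V →ₗ[k] G) (v : V ≃ₗ[k] W), Ω.IsEquivalence Ω' r v := by
  simp only [ExtendingDatum.isEquivalence_iff_isMorphismPair]
  constructor
  · rintro ⟨ψ, hbracket, hstab⟩
    obtain ⟨r, v, hψ⟩ := exists_eq_stabilizingMap (ψ := ψ.toLinearMap) hstab
    have hψ_apply (p : G × V) : ψ p = stabilizingMap r v p := LinearMap.congr_fun hψ p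
    have hv : Function.Bijective v :=
      bijective_stabilizingMap_iff.1 ((funext hψ_apply : ⇑ψ = _) ▸ ψ.bijective)
    simp only [hψ_apply] at hbracket
    exact ⟨r, .ofBijective v hv, .of_stabilizingMap_bracket hbracket⟩
  · rintro ⟨r, v, hpair⟩
    have hbij : Function.Bijective (stabilizingMap r v.toLinearMap) :=
      bijective_stabilizingMap_iff.2 v.bijective
    exact ⟨.ofBijective _ hbij, hpair.stabilizingMap_bracket, fun a => by simp⟩

/-- Two unified products are isomorphic via an isomorphism stabilizing `G` iff the
two Lie extending structures are equivalent (Definition 2.5 / Theorem 2.6). -/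
theorem isomorphic_stab_iff_equivalent {k G V : Type*} [Field k] [LieRing G]
    [LieAlgebra k G] [AddCommGroup V] [Module k V]
    (tl : V →ₗ[k] G →ₗ[k] V) (tr : V →ₗ[k] G →ₗ[k] G)
    (f : V →ₗ[k] V →ₗ[k] G) (br : V →ₗ[k] V →ₗ[k] V)
    (tl' : V →ₗ[k] G →ₗ[k] V) (tr' : V →ₗ[k] G →ₗ[k] G)
    (f' : V →ₗ[k] V →ₗ[k] G) (br' : V →ₗ[k] V →ₗ[k] V)
    (hΩ : IsLieBracket (unifiedBracket tl tr f br))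
    (hΩ' : IsLieBracket (unifiedBracket tl' tr' f' br')) :
    (∃ ψ : (G × V) ≃ₗ[k] G × V,
        (∀ u w : G × V, ψ (unifiedBracket tl tr f br u w) =
          unifiedBracket tl' tr' f' br' (ψ u) (ψ w)) ∧
        ∀ a : G, ψ (a, 0) = (a, 0)) ↔
      (∃ (r : V →ₗ[k] G) (v : V ≃ₗ[k] V),
        (∀ (x : V) (g : G), tl' x g = v (tl (v.symm x) g)) ∧
        (∀ (x : V) (g : G),
          tr' x g = r (tl (v.symm x) g) + tr (v.symm x) g + ⁅g, r (v.symm x)⁆) ∧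
        (∀ x y : V,
          f' x y = f (v.symm x) (v.symm y) + r (br (v.symm x) (v.symm y))
            + ⁅r (v.symm x), r (v.symm y)⁆
            - r (tl (v.symm x) (r (v.symm y))) - tr (v.symm x) (r (v.symm y))
            + r (tl (v.symm y) (r (v.symm x))) + tr (v.symm y) (r (v.symm x))) ∧
        (∀ x y : V,
          br' x y = v (br (v.symm x) (v.symm y))
            - v (tl (v.symm x) (r (v.symm y))) + v (tl (v.symm y) (r (v.symm x))))) :=
  isomorphic_stab_iff_equivalent_general ⟨tl, tr, f, br⟩ ⟨tl', tr', f', br'⟩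
end

section
/- Let k be a field, E a Lie algebra over k, and g ⊆ E a Lie ideal of E. Let p : E → g be a k-linear retraction and V := ker p. Then there exist a Lie algebra bracket {−,−} on V and bilinear maps ▷ : V × g → g, f : V × V → g forming a crossed system (i.e. the bracket [(g,x),(h,y)] = ([g,h] + x ▷ h − y ▷ g + f(x,y), {x,y}) is a Lie algebra bracket on g × V), such that the map φ : g × V → E, φ(g,x) := g + x, is an isomorphism of Lie algebras from this crossed product to E which stabilizes g (φ(g,0) = g for all g ∈ g). Explicitly one may take x ▷ g := p([x,g]) = [x,g], f(x,y) := p([x,y]) and {x,y} := [x,y] − p([x,y]); in particular the map x ◁ g := [x,g] − p([x,g]) is identically zero because g is an ideal. -/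
/-- The crossed product bracket on `G × ker p` induced by a linear retraction
`p : E → G` of the inclusion `ι : G → E` of an ideal, where `x ▷ g = p[x, g]`,
`f(x,y) = p[x,y]` and `{x,y} = [x,y] - p[x,y]`. -/
def idealCrossedBracket {k G E : Type*} [Field k] [LieRing G] [LieAlgebra k G]
    [LieRing E] [LieAlgebra k E] (ι : G →ₗ⁅k⁆ E) (p : E →ₗ[k] G)
    (hp : ∀ a : G, p (ι a) = a) :
    G × LinearMap.ker p → G × LinearMap.ker p → G × LinearMap.ker p :=
  fun u w =>
    (⁅u.1, w.1⁆ + p ⁅(u.2 : E), ι w.1⁆ - p ⁅(w.2 : E), ι u.1⁆ + p ⁅(u.2 : E), (w.2 : E)⁆,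
     ⟨⁅(u.2 : E), (w.2 : E)⁆ - ι (p ⁅(u.2 : E), (w.2 : E)⁆),
      by simp [LinearMap.mem_ker, hp]⟩)

/-!
The map `φ (g, x) = g + x` is a linear bijection `G × ker p → E`, with inverse
`e ↦ (p e, e - p e)`. Expanding `⁅g + x, h + y⁆` and splitting `⁅x, y⁆` into its components along
`G` and `ker p` gives `φ` of the crossed bracket: the mixed terms `⁅x, h⁆` and `⁅g, y⁆` stay in `G`
since `G` is an ideal. The Lie axioms then hold on `G × ker p` because they hold in `E`.
-/

theorem isLieBracket_lie {L : Type*} [LieRing L] : IsLieBracket fun x y : L ↦ ⁅x, y⁆ :=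
  ⟨lie_self, lie_jacobi⟩

theorem IsLieBracket.of_injective_s8 {L M : Type*} [AddCommGroup L] [AddCommGroup M]
    {B : L → L → L} {C : M → M → M} (hC : IsLieBracket C) (φ : L →+ M)
    (hφ : Function.Injective φ) (hBC : ∀ x y, φ (B x y) = C (φ x) (φ y)) : IsLieBracket B where
  left x := hφ <| by rw [hBC, hC.1, map_zero]
  right x y z := hφ <| by simp only [map_add, hBC, hC.2, map_zero]

section Retraction

variable {R M N : Type*} [Ring R] [AddCommGroup M] [Module R M] [AddCommGroup N] [Module R N]
  (i : M →ₗ[R] N) (p : N →ₗ[R] M) (h : Function.LeftInverse p i)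

/-- The decomposition `M × ker p ≃ N`, `(m, x) ↦ i m + x`, of a module `N` induced by a linear
retraction `p` of `i : M → N`. -/
def prodKerEquivOfLeftInverse : (M × LinearMap.ker p) ≃ₗ[R] N where
  __ := i.coprod (LinearMap.ker p).subtype
  invFun n := (p n, ⟨n - i (p n), by rw [LinearMap.mem_ker, map_sub, h, sub_self]⟩)
  left_inv := by
    rintro ⟨m, x, hx⟩
    have hpm : p (i m + x) = m := by rw [map_add, h, LinearMap.mem_ker.mp hx, add_zero]
    simp [hpm]
  right_inv n := by simp

theorem prodKerEquivOfLeftInverse_apply (u : M × LinearMap.ker p) :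
    prodKerEquivOfLeftInverse i p h u = i u.1 + u.2 :=
  rfl

end Retraction

theorem prodKerEquivOfLeftInverse_idealCrossedBracket {k G E : Type*} [Field k]
    [LieRing G] [LieAlgebra k G] [LieRing E] [LieAlgebra k E] (ι : G →ₗ⁅k⁆ E) (p : E →ₗ[k] G)
    (hp : ∀ a : G, p (ι a) = a)
    (hlie : ∀ (x : LinearMap.ker p) (a : G), ι (p ⁅(x : E), ι a⁆) = ⁅(x : E), ι a⁆)
    (u w : G × LinearMap.ker p) :
    prodKerEquivOfLeftInverse (ι : G →ₗ[k] E) p hp (idealCrossedBracket ι p hp u w) =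
      ⁅prodKerEquivOfLeftInverse (ι : G →ₗ[k] E) p hp u,
        prodKerEquivOfLeftInverse (ι : G →ₗ[k] E) p hp w⁆ := by
  obtain ⟨a, x⟩ := u
  obtain ⟨b, y⟩ := w
  simp only [prodKerEquivOfLeftInverse_apply, LieHom.coe_toLinearMap]
  calc ι (⁅a, b⁆ + p ⁅(x : E), ι b⁆ - p ⁅(y : E), ι a⁆ + p ⁅(x : E), (y : E)⁆) +
        (⁅(x : E), (y : E)⁆ - ι (p ⁅(x : E), (y : E)⁆))
      = ⁅ι a, ι b⁆ + ⁅(x : E), ι b⁆ - ⁅(y : E), ι a⁆ + ⁅(x : E), (y : E)⁆ := by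
        simp only [map_add, map_sub, LieHom.map_lie, hlie]
        abel
    _ = ⁅ι a + (x : E), ι b + (y : E)⁆ := by
        rw [add_lie, lie_add, lie_add, ← lie_skew (ι a) (y : E)]
        abel

/-- Corollary 3.1: if `G` is an ideal of `E`, then `E` is isomorphic, via
`φ(g,x) = g + x`, to a crossed product `G #^f V` with `V = ker p`; the action
`◁` is identically zero because `G` is an ideal, i.e. `p[x,g] = [x,g]`. -/
theorem ideal_iso_crossed_product {k G E : Type*} [Field k]
    [LieRing G] [LieAlgebra k G] [LieRing E] [LieAlgebra k E]
    (ι : G →ₗ⁅k⁆ E) (hι : Function.Injective ι)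
    (hideal : ∀ (e : E) (a : G), ∃ b : G, ι b = ⁅e, ι a⁆)
    (p : E →ₗ[k] G) (hp : ∀ a : G, p (ι a) = a) :
    (∀ (x : LinearMap.ker p) (a : G), ι (p ⁅(x : E), ι a⁆) = ⁅(x : E), ι a⁆) ∧
    IsLieBracket (idealCrossedBracket ι p hp) ∧
    ∃ φ : G × LinearMap.ker p → E,
      (∀ u : G × LinearMap.ker p, φ u = ι u.1 + (u.2 : E)) ∧
      (∀ u w : G × LinearMap.ker p, φ (idealCrossedBracket ι p hp u w) = ⁅φ u, φ w⁆) ∧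
      Function.Bijective φ ∧
      (∀ a : G, φ (a, 0) = ι a) := by
  have hlie (x : LinearMap.ker p) (a : G) : ι (p ⁅(x : E), ι a⁆) = ⁅(x : E), ι a⁆ :=
    Function.LeftInverse.rightInvOn_range hp (hideal x a)
  let φ := prodKerEquivOfLeftInverse (ι : G →ₗ[k] E) p hp
  have hφ := prodKerEquivOfLeftInverse_idealCrossedBracket ι p hp hlie
  have hLie : IsLieBracket (idealCrossedBracket ι p hp) :=
    isLieBracket_lie.of_injective_s8 (φ : G × LinearMap.ker p →+ E) φ.injective hφ
  exact ⟨hlie, hLie, φ, fun _ ↦ rfl, hφ, φ.bijective, fun a ↦ add_zero (ι a)⟩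
end

section
/- Let k be a field, g a Lie algebra over k, V a k-vector space, and let (◁, ▷, f, {−,−}) be an extending datum of g through V in which f is the trivial map (f(x,y) = 0 for all x, y ∈ V). Then the unified product bracket [(g,x),(h,y)] = ([g,h] + x ▷ h − y ▷ g, {x,y} + x ◁ h − y ◁ g) is a Lie algebra bracket on g × V if and only if (V, {−,−}) is a Lie algebra, g is a left V-module under ▷ (i.e. {x,y} ▷ g = x ▷ (y ▷ g) − y ▷ (x ▷ g)), V is a right g-module under ◁ (i.e. x ◁ [g,h] = (x ◁ g) ◁ h − (x ◁ h) ◁ g), and for all g, h ∈ g and x, y ∈ V: x ▷ [g,h] = [x ▷ g, h] + [g, x ▷ h] + (x ◁ g) ▷ h − (x ◁ h) ▷ g, and {x,y} ◁ g = {x, y ◁ g} + {x ◁ g, y} + x ◁ (y ▷ g) − y ◁ (x ▷ g). -/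
/-- The bicrossed product bracket
`[(g,x),(h,y)] = ([g,h] + x ▷ h - y ▷ g, {x,y} + x ◁ h - y ◁ g)` on `G × V`,
i.e. the unified product bracket when the cocycle `f` is trivial. -/
def bicrossedProductBracket {k G V : Type*} [Field k] [LieRing G] [LieAlgebra k G]
    [AddCommGroup V] [Module k V]
    (tl : V →ₗ[k] G →ₗ[k] V) (tr : V →ₗ[k] G →ₗ[k] G) (br : V →ₗ[k] V →ₗ[k] V) :
    G × V → G × V → G × V :=
  fun p q =>
    (⁅p.1, q.1⁆ + tr p.2 q.1 - tr q.2 p.1,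
     br p.2 q.2 + tl p.2 q.1 - tl q.2 p.1)

/-!
The Jacobiator of a bilinear bracket is trilinear and invariant under cyclic rotation, so on
`G × V` it vanishes as soon as it vanishes on triples of types `GGG`, `VGG`, `VVG` and `VVV`.
For the bicrossed product bracket the first is the Jacobi identity of `G`, the last that of `V`,
and the two components of each mixed one are the four matched pair axioms.
-/

section Jacobiator

variable {R L M N : Type*} [CommSemiring R] [AddCommMonoid L] [Module R L]
  [AddCommMonoid M] [Module R M] [AddCommMonoid N] [Module R N]

theorem jacobiator_prod_eq_zero_iff (B : M × N →ₗ[R] M × N →ₗ[R] M × N) :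
    (∀ p q r, jacobiator B p q r = 0) ↔
      (∀ a b c : M, jacobiator B (a, 0) (b, 0) (c, 0) = 0) ∧
      (∀ (x : N) (a b : M), jacobiator B (0, x) (a, 0) (b, 0) = 0) ∧
      (∀ (x y : N) (a : M), jacobiator B (0, x) (0, y) (a, 0) = 0) ∧
      ∀ x y z : N, jacobiator B (0, x) (0, y) (0, z) = 0 := by
  refine ⟨fun h => ⟨fun _ _ _ => h _ _ _, fun _ _ _ => h _ _ _, fun _ _ _ => h _ _ _,
    fun _ _ _ => h _ _ _⟩, ?_⟩
  rintro ⟨hMMM, hNMM, hNNM, hNNN⟩ ⟨a, x⟩ ⟨b, y⟩ ⟨c, z⟩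
  have hMNM : jacobiator B (a, 0) (0, y) (c, 0) = 0 := by rw [← jacobiator_rotate, hNMM]
  have hMMN : jacobiator B (a, 0) (b, 0) (0, z) = 0 := by rw [jacobiator_rotate, hNMM]
  have hMNN : jacobiator B (a, 0) (0, y) (0, z) = 0 := by rw [← jacobiator_rotate, hNNM]
  have hNMN : jacobiator B (0, x) (b, 0) (0, z) = 0 := by rw [jacobiator_rotate, hNNM]
  have split (m : M) (n : N) : (m, n) = (m, 0) + (0, n) := by simp
  rw [split a x, split b y, split c z]
  simp only [jacobiator_add_left, jacobiator_add_middle, jacobiator_add_right, hMMM, hMMN, hMNM,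
    hMNN, hNMM, hNMN, hNNM, hNNN, add_zero]

end Jacobiator

section BicrossedProduct

variable {R G V : Type*} [CommRing R] [LieRing G] [LieAlgebra R G] [AddCommGroup V] [Module R V]
  (tl : V →ₗ[R] G →ₗ[R] V) (tr : V →ₗ[R] G →ₗ[R] G) (br : V →ₗ[R] V →ₗ[R] V)

/-- The bicrossed product bracket on `G × V` over a commutative ring, bundled as a bilinear map;
over a field its underlying function is `bicrossedProductBracket`. -/
def bicrossedProductBilin : G × V →ₗ[R] G × V →ₗ[R] G × V :=
  LinearMap.mk₂ R
    (fun p q => (⁅p.1, q.1⁆ + tr p.2 q.1 - tr q.2 p.1, br p.2 q.2 + tl p.2 q.1 - tl q.2 p.1))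
    (fun p p' q => by
      simp only [Prod.fst_add, Prod.snd_add, Prod.mk_add_mk, add_lie, map_add, LinearMap.add_apply]
      congr 1 <;> abel)
    (fun c p q => by simp [smul_add, smul_sub])
    (fun p q q' => by
      simp only [Prod.fst_add, Prod.snd_add, Prod.mk_add_mk, lie_add, map_add, LinearMap.add_apply]
      congr 1 <;> abel)
    (fun c p q => by simp [smul_add, smul_sub])

theorem bicrossedProductBilin_apply (p q : G × V) :
    bicrossedProductBilin tl tr br p q =
      (⁅p.1, q.1⁆ + tr p.2 q.1 - tr q.2 p.1, br p.2 q.2 + tl p.2 q.1 - tl q.2 p.1) :=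
  rfl

theorem bicrossedProductBilin_isAlt_iff : (bicrossedProductBilin tl tr br).IsAlt ↔ br.IsAlt := by
  simp [LinearMap.IsAlt, bicrossedProductBilin_apply]

theorem bicrossedProductBilin_inl_apply (a b : G) (y : V) :
    bicrossedProductBilin tl tr br (a, 0) (b, y) = (⁅a, b⁆ - tr y a, -tl y a) := by
  simp [bicrossedProductBilin_apply]

theorem bicrossedProductBilin_inr_apply (x y : V) (b : G) :
    bicrossedProductBilin tl tr br (0, x) (b, y) = (tr x b, br x y + tl x b) := by
  simp [bicrossedProductBilin_apply]

theorem jacobiator_bicrossedProductBilin_inl_inl_inl (a b c : G) :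
    jacobiator (bicrossedProductBilin tl tr br) (a, 0) (b, 0) (c, 0) = 0 := by
  simp [jacobiator, bicrossedProductBilin_inl_apply, lie_jacobi]

theorem jacobiator_bicrossedProductBilin_inr_inl_inl (x : V) (a b : G) :
    jacobiator (bicrossedProductBilin tl tr br) (0, x) (a, 0) (b, 0) =
      (tr x ⁅a, b⁆ - (⁅tr x a, b⁆ + ⁅a, tr x b⁆ + tr (tl x a) b - tr (tl x b) a),
        tl x ⁅a, b⁆ - (tl (tl x a) b - tl (tl x b) a)) := by
  simp only [jacobiator, bicrossedProductBilin_inl_apply, bicrossedProductBilin_inr_apply,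
    map_zero, map_neg, LinearMap.zero_apply, LinearMap.neg_apply, lie_zero, lie_neg, zero_add,
    sub_zero, zero_sub, ← lie_skew b (tr x a), Prod.mk_add_mk]
  congr 1 <;> abel

variable {br} in
theorem jacobiator_bicrossedProductBilin_inr_inr_inl (hbr : br.IsAlt) (x y : V) (a : G) :
    jacobiator (bicrossedProductBilin tl tr br) (0, x) (0, y) (a, 0) =
      (tr x (tr y a) - tr y (tr x a) - tr (br x y) a,
        br x (tl y a) + br (tl x a) y + tl x (tr y a) - tl y (tr x a) - tl (br x y) a) := by
  simp only [jacobiator, bicrossedProductBilin_inl_apply, bicrossedProductBilin_inr_apply,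
    map_zero, map_neg, lie_zero, zero_add, add_zero, zero_sub, ← hbr.neg y (tl x a),
    Prod.mk_add_mk]
  congr 1 <;> abel

theorem jacobiator_bicrossedProductBilin_inr_inr_inr (x y z : V) :
    jacobiator (bicrossedProductBilin tl tr br) (0, x) (0, y) (0, z) =
      (0, jacobiator br x y z) := by
  simp [jacobiator, bicrossedProductBilin_inr_apply]

variable {br} in
theorem jacobiator_bicrossedProductBilin_eq_zero_iff (hbr : br.IsAlt) :
    (∀ p q r, jacobiator (bicrossedProductBilin tl tr br) p q r = 0) ↔
      (∀ x y z, jacobiator br x y z = 0) ∧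
      (∀ x y g, tr (br x y) g = tr x (tr y g) - tr y (tr x g)) ∧
      (∀ x g h, tl x ⁅g, h⁆ = tl (tl x g) h - tl (tl x h) g) ∧
      (∀ x g h, tr x ⁅g, h⁆ = ⁅tr x g, h⁆ + ⁅g, tr x h⁆ + tr (tl x g) h - tr (tl x h) g) ∧
      (∀ x y g, tl (br x y) g =
        br x (tl y g) + br (tl x g) y + tl x (tr y g) - tl y (tr x g)) := by
  simp only [jacobiator_prod_eq_zero_iff, jacobiator_bicrossedProductBilin_inl_inl_inl,
    jacobiator_bicrossedProductBilin_inr_inl_inl,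
    jacobiator_bicrossedProductBilin_inr_inr_inl tl tr hbr,
    jacobiator_bicrossedProductBilin_inr_inr_inr, Prod.mk_eq_zero, sub_eq_zero, forall_and,
    implies_true, true_and, eq_comm (b := tr (br _ _) _), eq_comm (b := tl (br _ _) _)]
  tauto

theorem bicrossedProduct_isLieBracket_iff_general :
    IsLieBracket (fun p q => bicrossedProductBilin tl tr br p q) ↔
      (((∀ x : V, br x x = 0) ∧
        ∀ x y z : V, br x (br y z) + br y (br z x) + br z (br x y) = 0) ∧
       (∀ (x y : V) (g : G), tr (br x y) g = tr x (tr y g) - tr y (tr x g)) ∧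
       (∀ (x : V) (g h : G), tl x ⁅g, h⁆ = tl (tl x g) h - tl (tl x h) g) ∧
       (∀ (x : V) (g h : G),
          tr x ⁅g, h⁆ = ⁅tr x g, h⁆ + ⁅g, tr x h⁆ + tr (tl x g) h - tr (tl x h) g) ∧
       (∀ (x y : V) (g : G),
          tl (br x y) g = br x (tl y g) + br (tl x g) y + tl x (tr y g) - tl y (tr x g))) :=
  calc
    _ ↔ (bicrossedProductBilin tl tr br).IsAlt ∧
          ∀ p q r, jacobiator (bicrossedProductBilin tl tr br) p q r = 0 := Iff.rfl
    _ ↔ br.IsAlt ∧ ∀ p q r, jacobiator (bicrossedProductBilin tl tr br) p q r = 0 :=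
      and_congr_left' (bicrossedProductBilin_isAlt_iff tl tr br)
    _ ↔ _ := and_congr_right (jacobiator_bicrossedProductBilin_eq_zero_iff tl tr)
    _ ↔ _ := and_assoc.symm

end BicrossedProduct

/-- Section 3 (bicrossed products): when `f` is trivial, the unified product is a Lie
algebra iff `(V, {-,-})` is a Lie algebra and `(G, V, ◁, ▷)` is a matched pair. -/
theorem bicrossedProduct_isLieBracket_iff {k G V : Type*} [Field k] [LieRing G]
    [LieAlgebra k G] [AddCommGroup V] [Module k V]
    (tl : V →ₗ[k] G →ₗ[k] V) (tr : V →ₗ[k] G →ₗ[k] G) (br : V →ₗ[k] V →ₗ[k] V) :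
    IsLieBracket (bicrossedProductBracket tl tr br) ↔
      (((∀ x : V, br x x = 0) ∧
        ∀ x y z : V, br x (br y z) + br y (br z x) + br z (br x y) = 0) ∧
       (∀ (x y : V) (g : G), tr (br x y) g = tr x (tr y g) - tr y (tr x g)) ∧
       (∀ (x : V) (g h : G), tl x ⁅g, h⁆ = tl (tl x g) h - tl (tl x h) g) ∧
       (∀ (x : V) (g h : G),
          tr x ⁅g, h⁆ = ⁅tr x g, h⁆ + ⁅g, tr x h⁆ + tr (tl x g) h - tr (tl x h) g) ∧
       (∀ (x y : V) (g : G),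
          tl (br x y) g = br x (tl y g) + br (tl x g) y + tl x (tr y g) - tl y (tr x g))) :=
  bicrossedProduct_isLieBracket_iff_general tl tr br
end

section
/- Let k be a field of characteristic ≠ 2 and let (g, h, ◁, ▷) be a matched pair of Lie algebras over k, with bicrossed product g ⨝ h the Lie algebra on g × h with bracket [(g,x),(h,y)] = ([g,h] + x ▷ h − y ▷ g, {x,y} + x ◁ h − y ◁ g), where {−,−} denotes the bracket of h. Then the linear map J : g ⨝ h → g ⨝ h defined by J(g,x) := (g, −x) satisfies J ∘ J = Id and is integrable, i.e. J([a,b]) = [J(a), b] + [a, J(b)] − J([J(a), J(b)]) for all a, b ∈ g ⨝ h. -/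
/-- The bicrossed product bracket of a matched pair `(G, H, ◁, ▷)` of Lie algebras:
`[(g,x),(h,y)] = ([g,h] + x ▷ h - y ▷ g, [x,y] + x ◁ h - y ◁ g)`. -/
def matchedPairBracket {k G H : Type*} [Field k] [LieRing G] [LieAlgebra k G]
    [LieRing H] [LieAlgebra k H]
    (tl : H →ₗ[k] G →ₗ[k] H) (tr : H →ₗ[k] G →ₗ[k] G) :
    G × H → G × H → G × H :=
  fun p q =>
    (⁅p.1, q.1⁆ + tr p.2 q.1 - tr q.2 p.1,
     ⁅p.2, q.2⁆ + tl p.2 q.1 - tl q.2 p.1)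

/-!
Integrability of `J` with respect to a bilinear bracket is the vanishing of an expression that is
bilinear in `(a, b)`, so it may be checked on vectors on which `J` acts as `1` or `-1`. For two
vectors of opposite sign the terms cancel in pairs; for two vectors of the same sign the condition
holds as soon as their bracket has that sign again. For `J (g, x) = (g, -x)` this only asks that
both factors of `G × H` be closed under the bracket.
-/

section Integrable

variable {R M : Type*} [CommRing R] [AddCommGroup M] [Module R M]

/-- Integrability of an endomorphism `J` with respect to a bracket, given as a bilinear map `B`. -/
def IsIntegrable (B : M →ₗ[R] M →ₗ[R] M) (J : Module.End R M) : Prop :=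
  ∀ a b, J (B a b) = B (J a) b + B a (J b) - J (B (J a) (J b))

theorem isIntegrable_of_codisjoint {B : M →ₗ[R] M →ₗ[R] M} {J : Module.End R M}
    {P N : Submodule R M} (hPN : Codisjoint P N)
    (hJP : ∀ p ∈ P, J p = p) (hJN : ∀ n ∈ N, J n = -n)
    (hBP : ∀ p ∈ P, ∀ p' ∈ P, B p p' ∈ P) (hBN : ∀ n ∈ N, ∀ n' ∈ N, B n n' ∈ N) :
    IsIntegrable B J := by
  intro a b
  obtain ⟨p, n, hp, hn, rfl⟩ := Submodule.codisjoint_iff_exists_add_eq.mp hPN a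
  obtain ⟨p', n', hp', hn', rfl⟩ := Submodule.codisjoint_iff_exists_add_eq.mp hPN b
  have hpp' : J (B p p') = B p p' := hJP _ (hBP p hp p' hp')
  have hnn' : J (B n n') = -B n n' := hJN _ (hBN n hn n' hn')
  simp only [map_add, map_neg, LinearMap.add_apply, LinearMap.neg_apply,
    hJP p hp, hJP p' hp', hJN n hn, hJN n' hn', hpp', hnn']
  abel

end Integrable

section NegSnd

variable (R M N : Type*) [CommRing R] [AddCommGroup M] [Module R M] [AddCommGroup N] [Module R N]

/-- The map `J (m, n) = (m, -n)` of the theorem, as a linear endomorphism of `M × N`. -/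
def negSnd : Module.End R (M × N) :=
  LinearMap.id.prodMap (-LinearMap.id)

variable {R M N}

@[simp]
theorem negSnd_apply (u : M × N) : negSnd R M N u = (u.1, -u.2) :=
  rfl

theorem negSnd_involutive : Function.Involutive (negSnd R M N) :=
  fun u => by simp

theorem isIntegrable_negSnd {B : M × N →ₗ[R] M × N →ₗ[R] M × N}
    (hM : ∀ m m', (B (m, 0) (m', 0)).2 = 0) (hN : ∀ n n', (B (0, n) (0, n')).1 = 0) :
    IsIntegrable B (negSnd R M N) := by
  refine isIntegrable_of_codisjoint
    (P := LinearMap.range (LinearMap.inl R M N)) (N := LinearMap.range (LinearMap.inr R M N))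
    LinearMap.isCompl_range_inl_inr.codisjoint ?_ ?_ ?_ ?_
  · rintro _ ⟨m, rfl⟩
    simp
  · rintro _ ⟨n, rfl⟩
    simp
  · rintro _ ⟨m, rfl⟩ _ ⟨m', rfl⟩
    exact ⟨_, Prod.ext rfl (hM m m').symm⟩
  · rintro _ ⟨n, rfl⟩ _ ⟨n', rfl⟩
    exact ⟨_, Prod.ext (hN n n').symm rfl⟩

theorem bicrossed_complex_product_structure_general {B : M × N →ₗ[R] M × N →ₗ[R] M × N}
    (hM : ∀ m m', (B (m, 0) (m', 0)).2 = 0) (hN : ∀ n n', (B (0, n) (0, n')).1 = 0) :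
    Function.Involutive (negSnd R M N) ∧ IsIntegrable B (negSnd R M N) :=
  ⟨negSnd_involutive, isIntegrable_negSnd hM hN⟩

end NegSnd

section MatchedPair

variable {k G H : Type*} [Field k] [LieRing G] [LieAlgebra k G] [LieRing H] [LieAlgebra k H]
  (tl : H →ₗ[k] G →ₗ[k] H) (tr : H →ₗ[k] G →ₗ[k] G)

/-- `matchedPairBracket` bundled as a bilinear map. -/
def matchedPairBilin : G × H →ₗ[k] G × H →ₗ[k] G × H :=
  LinearMap.mk₂ k (matchedPairBracket tl tr)
    (fun u u' w => by
      ext <;> simp only [matchedPairBracket, Prod.fst_add, Prod.snd_add, add_lie, map_add,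
        LinearMap.add_apply] <;> abel)
    (fun c u w => by ext <;> simp [matchedPairBracket, smul_add, smul_sub])
    (fun u w w' => by
      ext <;> simp only [matchedPairBracket, Prod.fst_add, Prod.snd_add, lie_add, map_add,
        LinearMap.add_apply] <;> abel)
    (fun c u w => by ext <;> simp [matchedPairBracket, smul_add, smul_sub])

theorem matchedPairBilin_inl_inl_snd (g h : G) :
    (matchedPairBilin tl tr (g, 0) (h, 0)).2 = 0 := by
  simp [matchedPairBilin, matchedPairBracket]

theorem matchedPairBilin_inr_inr_fst (x y : H) :
    (matchedPairBilin tl tr (0, x) (0, y)).1 = 0 := by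
  simp [matchedPairBilin, matchedPairBracket]

end MatchedPair

/-- Remark 3.3: for a matched pair of Lie algebras over a field of characteristic
`≠ 2`, the map `J(g,x) = (g,-x)` is a complex product structure on the bicrossed
product: `J ∘ J = Id` and `J` is integrable. -/
theorem bicrossed_complex_product_structure {k G H : Type*} [Field k]
    [LieRing G] [LieAlgebra k G] [LieRing H] [LieAlgebra k H]
    (hchar : (2 : k) ≠ 0)
    (tl : H →ₗ[k] G →ₗ[k] H) (tr : H →ₗ[k] G →ₗ[k] G)
    (hmodG : ∀ (x y : H) (g : G), tr ⁅x, y⁆ g = tr x (tr y g) - tr y (tr x g))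
    (hmodH : ∀ (x : H) (g h : G), tl x ⁅g, h⁆ = tl (tl x g) h - tl (tl x h) g)
    (hmp1 : ∀ (x : H) (g h : G),
      tr x ⁅g, h⁆ = ⁅tr x g, h⁆ + ⁅g, tr x h⁆ + tr (tl x g) h - tr (tl x h) g)
    (hmp2 : ∀ (x y : H) (g : G),
      tl ⁅x, y⁆ g = ⁅x, tl y g⁆ + ⁅tl x g, y⁆ + tl x (tr y g) - tl y (tr x g)) :
    (∀ u : G × H, (fun w : G × H => (w.1, -w.2)) ((fun w : G × H => (w.1, -w.2)) u) = u) ∧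
    (∀ u w : G × H,
      (fun z : G × H => (z.1, -z.2)) (matchedPairBracket tl tr u w) =
        matchedPairBracket tl tr (u.1, -u.2) w + matchedPairBracket tl tr u (w.1, -w.2)
          - (fun z : G × H => (z.1, -z.2))
              (matchedPairBracket tl tr (u.1, -u.2) (w.1, -w.2))) := by
  exact bicrossed_complex_product_structure_general (matchedPairBilin_inl_inl_snd tl tr)
    (matchedPairBilin_inr_inr_fst tl tr)
end

section
/- Let k be a field, g a Lie algebra over k, and let (λ, D) and (λ', D') be twisted derivations of g, with associated Lie algebras g ⋈_{(λ,D)} k and g ⋈_{(λ',D')} k on g × k with bracket [(g,a),(h,b)] = ([g,h] + a·D(h) − b·D(g), a·λ(h) − b·λ(g)) (respectively with (λ', D')). There exists an isomorphism of Lie algebras g ⋈_{(λ,D)} k → g ⋈_{(λ',D')} k which stabilizes g (i.e. maps (g,0) to (g,0) for all g ∈ g) if and only if λ = λ' and there exist g₀ ∈ g and a nonzero scalar q ∈ k such that D(h) = q·D'(h) + [g₀, h] − λ(h)·g₀ for all h ∈ g. -/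
/-- The bracket of `G ⋈_{(λ,D)} k` on `G × k`. -/
def twDerBracket {k G : Type*} [Field k] [LieRing G] [LieAlgebra k G]
    (lam : G →ₗ[k] k) (D : G →ₗ[k] G) : G × k → G × k → G × k :=
  fun u w =>
    (⁅u.1, w.1⁆ + u.2 • D w.1 - w.2 • D u.1, u.2 * lam w.1 - w.2 * lam u.1)

/-!
A linear endomorphism `ψ` of `G × k` fixing `G × 0` is determined by `ψ (0, 1) = (g₀, q)`, and it is
invertible exactly when `q` is a unit. Since `(0, 1)` brackets with `(h, 0)` to `(D h, λ h)`,
compatibility of `ψ` with the brackets on these pairs reads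
`(D h + λ h • g₀, λ h * q) = (⁅g₀, h⁆ + q • D' h, q * λ' h)`. By bilinearity and antisymmetry, this
already forces compatibility on all pairs.
-/

section StabilizingEquiv

variable {R M : Type*} [CommRing R] [AddCommGroup M] [Module R M]

/-- The linear automorphism `(m, a) ↦ (m + a • m₀, q * a)` of `M × R`. These are the candidates for
isomorphisms stabilizing `M`: they fix `M × 0` pointwise and send `(0, 1)` to `(m₀, q)`. It is
Mathlib's `LinearEquiv.skewProd` with the two factors exchanged. -/
def scaledShear (m₀ : M) (q : Rˣ) : (M × R) ≃ₗ[R] M × R :=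
  LinearEquiv.prodComm R M R ≪≫ₗ
    (LinearEquiv.smulOfUnit q).skewProd (LinearEquiv.refl R M)
      (LinearMap.toSpanSingleton R M m₀) ≪≫ₗ
    LinearEquiv.prodComm R R M

@[simp]
theorem scaledShear_apply (m₀ : M) (q : Rˣ) (u : M × R) :
    scaledShear m₀ q u = (u.1 + u.2 • m₀, q * u.2) :=
  rfl

theorem apply_eq_of_fixes_left {ψ : M × R →ₗ[R] M × R} (hψ : ∀ m, ψ (m, 0) = (m, 0)) (u : M × R) :
    ψ u = (u.1 + u.2 • (ψ (0, 1)).1, (ψ (0, 1)).2 * u.2) := by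
  have decomp : u = (u.1, 0) + u.2 • (0, 1) := by ext <;> simp
  calc
    ψ u = (u.1, 0) + u.2 • ψ (0, 1) := by rw [← hψ, ← map_smul, ← map_add, ← decomp]
    _ = (u.1 + u.2 • (ψ (0, 1)).1, (ψ (0, 1)).2 * u.2) := by ext <;> simp [mul_comm]

theorem isUnit_snd_apply_of_fixes_left {ψ : M × R →ₗ[R] M × R} (hψ : ∀ m, ψ (m, 0) = (m, 0))
    (hsurj : Function.Surjective ψ) : IsUnit (ψ (0, 1)).2 := by
  obtain ⟨u, hu⟩ := hsurj (0, 1)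
  rw [apply_eq_of_fixes_left hψ] at hu
  exact .of_mul_eq_one u.2 (congrArg Prod.snd hu)

theorem fixes_left_iff_exists_eq_scaledShear {ψ : (M × R) ≃ₗ[R] M × R} :
    (∀ m, ψ (m, 0) = (m, 0)) ↔ ∃ (m₀ : M) (q : Rˣ), ψ = scaledShear m₀ q := by
  constructor
  · intro hψ
    obtain ⟨q, hq⟩ := isUnit_snd_apply_of_fixes_left (ψ := ψ.toLinearMap) hψ ψ.surjective
    refine ⟨(ψ (0, 1)).1, q, LinearEquiv.ext fun u => ?_⟩
    rw [scaledShear_apply, hq]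
    exact apply_eq_of_fixes_left (ψ := ψ.toLinearMap) hψ u
  · rintro ⟨m₀, q, rfl⟩ m
    simp

end StabilizingEquiv

section Bracket

variable {k G : Type*} [Field k] [LieRing G] [LieAlgebra k G]
  {lam lam' : G →ₗ[k] k} {D D' : G →ₗ[k] G}

theorem twDerBracket_zero_one_left (lam : G →ₗ[k] k) (D : G →ₗ[k] G) (h : G) :
    twDerBracket lam D (0, 1) (h, 0) = (D h, lam h) := by
  simp [twDerBracket]

theorem eq_and_eq_of_scaledShear_twDerBracket {g₀ : G} {q : kˣ}
    (hψ : ∀ u w, scaledShear g₀ q (twDerBracket lam D u w) =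
      twDerBracket lam' D' (scaledShear g₀ q u) (scaledShear g₀ q w)) :
    lam = lam' ∧ ∀ h, D h = (q : k) • D' h + ⁅g₀, h⁆ - lam h • g₀ := by
  have key (h : G) :
      (D h + lam h • g₀, q * lam h) = (⁅g₀, h⁆ + (q : k) • D' h, q * lam' h) := by
    have hψh := hψ (0, 1) (h, 0)
    rw [twDerBracket_zero_one_left] at hψh
    simpa [twDerBracket] using hψh
  constructor
  · ext h
    exact q.mul_right_inj.mp (congrArg Prod.snd (key h))
  · intro h
    rw [eq_sub_iff_add_eq, add_comm (_ • D' h)]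
    exact congrArg Prod.fst (key h)

theorem scaledShear_twDerBracket {g₀ : G} {q : kˣ}
    (hD : ∀ h, D h = (q : k) • D' h + ⁅g₀, h⁆ - lam h • g₀) (u w : G × k) :
    scaledShear g₀ q (twDerBracket lam D u w) =
      twDerBracket lam D' (scaledShear g₀ q u) (scaledShear g₀ q w) := by
  ext
  · simp only [twDerBracket, scaledShear_apply, hD, map_add, map_smul, add_lie, lie_add, smul_lie,
      lie_smul, lie_self, ← lie_skew u.1 g₀]
    module
  · simp only [twDerBracket, scaledShear_apply, map_add, map_smul, smul_eq_mul]
    ring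

theorem scaledShear_twDerBracket_iff {g₀ : G} {q : kˣ} :
    (∀ u w, scaledShear g₀ q (twDerBracket lam D u w) =
      twDerBracket lam' D' (scaledShear g₀ q u) (scaledShear g₀ q w)) ↔
    lam = lam' ∧ ∀ h, D h = (q : k) • D' h + ⁅g₀, h⁆ - lam h • g₀ :=
  ⟨eq_and_eq_of_scaledShear_twDerBracket, by rintro ⟨rfl, hD⟩; exact scaledShear_twDerBracket hD⟩

theorem twDer_iso_stab_iff_general (lam lam' : G →ₗ[k] k) (D D' : G →ₗ[k] G) :
    (∃ ψ : (G × k) ≃ₗ[k] G × k,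
        (∀ u w : G × k, ψ (twDerBracket lam D u w) =
          twDerBracket lam' D' (ψ u) (ψ w)) ∧
        ∀ g : G, ψ (g, 0) = (g, 0)) ↔
      (lam = lam' ∧ ∃ (g₀ : G) (q : k), q ≠ 0 ∧
        ∀ h : G, D h = q • D' h + ⁅g₀, h⁆ - lam h • g₀) := by
  constructor
  · rintro ⟨ψ, hbracket, hfix⟩
    obtain ⟨g₀, q, rfl⟩ := fixes_left_iff_exists_eq_scaledShear.mp hfix
    obtain ⟨hlam, hD⟩ := scaledShear_twDerBracket_iff.mp hbracket
    exact ⟨hlam, g₀, q, q.ne_zero, hD⟩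
  · rintro ⟨hlam, g₀, q, hq, hD⟩
    exact ⟨scaledShear g₀ (Units.mk0 q hq), scaledShear_twDerBracket_iff.mpr ⟨hlam, hD⟩,
      fixes_left_iff_exists_eq_scaledShear.mpr ⟨g₀, Units.mk0 q hq, rfl⟩⟩

end Bracket

/-- Theorem 4.6 (part): there is a Lie algebra isomorphism
`G ⋈_{(λ,D)} k → G ⋈_{(λ',D')} k` stabilizing `G` iff `λ = λ'` and there exist
`g₀ ∈ G`, `q ∈ k*` with `D(h) = q·D'(h) + [g₀,h] - λ(h)·g₀` for all `h`. -/
theorem twDer_iso_stab_iff {k G : Type*} [Field k] [LieRing G] [LieAlgebra k G]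
    (lam lam' : G →ₗ[k] k) (D D' : G →ₗ[k] G)
    (hlam : ∀ g h : G, lam ⁅g, h⁆ = 0)
    (hD : ∀ g h : G, D ⁅g, h⁆ = ⁅D g, h⁆ + ⁅g, D h⁆ + lam g • D h - lam h • D g)
    (hlam' : ∀ g h : G, lam' ⁅g, h⁆ = 0)
    (hD' : ∀ g h : G, D' ⁅g, h⁆ = ⁅D' g, h⁆ + ⁅g, D' h⁆ + lam' g • D' h - lam' h • D' g) :
    (∃ ψ : (G × k) ≃ₗ[k] G × k,
        (∀ u w : G × k, ψ (twDerBracket lam D u w) =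
          twDerBracket lam' D' (ψ u) (ψ w)) ∧
        ∀ g : G, ψ (g, 0) = (g, 0)) ↔
      (lam = lam' ∧ ∃ (g₀ : G) (q : k), q ≠ 0 ∧
        ∀ h : G, D h = q • D' h + ⁅g₀, h⁆ - lam h • g₀) :=
  twDer_iso_stab_iff_general lam lam' D D'
end

section
/- Let k be a field, g a Lie algebra over k, and let (λ, D) and (λ', D') be twisted derivations of g, with associated Lie algebras g ⋈_{(λ,D)} k and g ⋈_{(λ',D')} k. There exists an isomorphism of Lie algebras g ⋈_{(λ,D)} k → g ⋈_{(λ',D')} k which stabilizes g (maps (g,0) to (g,0)) and co-stabilizes k (the second component of the image of (g,a) is a) if and only if λ = λ' and D − D' is an inner twisted derivation, i.e. there exists g₀ ∈ g such that D(h) − D'(h) = [g₀, h] − λ(h)·g₀ for all h ∈ g. -/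
/-!
A linear endomorphism of `G × k` that stabilizes `G` and co-stabilizes `k` is determined by the
`G`-component `r` of the image of `(0, 1)`: it is the transvection `(g, a) ↦ (g + a • r, a)`, and so
it is automatically bijective. Comparing brackets of `(0, 1)` with `(h, 0)` shows that it can only
carry the bracket of `(λ, D)` to that of `(λ', D')` if `λ = λ'` and `D - D'` is the inner twisted
derivation of `r`; conversely, these brackets and those within `G` determine the whole bracket.
-/

section Shear

variable {R M : Type*} [Ring R] [AddCommGroup M] [Module R M]

/-- The shear `(m, a) ↦ (m + a • r, a)` of `M × R` along `r : M`, as the transvection with linear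
form `Prod.snd` and vector `(r, 0)`. -/
def shear (r : M) : (M × R) ≃ₗ[R] M × R :=
  LinearEquiv.transvection (f := LinearMap.snd R M R) (v := (r, 0)) rfl

theorem shear_apply (r : M) (u : M × R) : shear r u = (u.1 + u.2 • r, u.2) := by
  have eq_add : shear r u = u + u.2 • (r, 0) := LinearEquiv.transvection.apply _ u
  ext <;> simp [eq_add]

theorem exists_eq_shear_iff (f : M × R →ₗ[R] M × R) :
    (∃ r : M, f = (shear r : (M × R) ≃ₗ[R] M × R)) ↔
      (∀ m : M, f (m, 0) = (m, 0)) ∧ ∀ u : M × R, (f u).2 = u.2 := by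
  constructor
  · rintro ⟨r, rfl⟩
    simp [shear_apply]
  · rintro ⟨stab, costab⟩
    have map_zero_one : f (0, 1) = ((f (0, 1)).1, 1) := Prod.ext rfl (costab (0, 1))
    refine ⟨(f (0, 1)).1, LinearMap.prod_ext (LinearMap.ext fun m ↦ ?_) (LinearMap.ext_ring ?_)⟩
    · simp [stab, shear_apply]
    · simpa [shear_apply] using map_zero_one

end Shear

section TwistedBracket

variable {k G : Type*} [Field k] [LieRing G] [LieAlgebra k G]
  {lam lam' : G →ₗ[k] k} {D D' : G →ₗ[k] G} {r : G}

theorem eq_and_sub_eq_of_shear_map_twDerBracket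
    (map_bracket : ∀ u w : G × k,
      shear r (twDerBracket lam D u w) = twDerBracket lam' D' (shear r u) (shear r w)) :
    lam = lam' ∧ ∀ h : G, D h - D' h = ⁅r, h⁆ - lam h • r := by
  have components (h : G) : D h + lam h • r = ⁅r, h⁆ + D' h ∧ lam h = lam' h := by
    simpa [shear_apply, twDerBracket] using map_bracket (0, 1) (h, 0)
  exact ⟨LinearMap.ext fun h ↦ (components h).2,
    fun h ↦ sub_eq_sub_iff_add_eq_add.mpr (components h).1⟩

theorem shear_map_twDerBracket_of_sub_eq
    (sub_eq : ∀ h : G, D h - D' h = ⁅r, h⁆ - lam h • r) (u w : G × k) :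
    shear r (twDerBracket lam D u w) = twDerBracket lam D' (shear r u) (shear r w) := by
  have D_eq (h : G) : D h = D' h + (⁅r, h⁆ - lam h • r) := sub_eq_iff_eq_add'.mp (sub_eq h)
  simp only [shear_apply, twDerBracket]
  ext
  · simp only [D_eq, map_add, map_smul, lie_add, add_lie, lie_smul, smul_lie, lie_self,
      ← lie_skew u.1 r]
    module
  · simp only [map_add, map_smul, smul_eq_mul]
    ring

theorem shear_map_twDerBracket_iff :
    (∀ u w : G × k,
      shear r (twDerBracket lam D u w) = twDerBracket lam' D' (shear r u) (shear r w)) ↔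
      lam = lam' ∧ ∀ h : G, D h - D' h = ⁅r, h⁆ - lam h • r := by
  refine ⟨eq_and_sub_eq_of_shear_map_twDerBracket, ?_⟩
  rintro ⟨rfl, sub_eq⟩
  exact shear_map_twDerBracket_of_sub_eq sub_eq

end TwistedBracket

theorem twDer_iso_stab_costab_iff_general {k G : Type*} [Field k] [LieRing G] [LieAlgebra k G]
    (lam lam' : G →ₗ[k] k) (D D' : G →ₗ[k] G) :
    (∃ ψ : (G × k) ≃ₗ[k] G × k,
        (∀ u w : G × k, ψ (twDerBracket lam D u w) =
          twDerBracket lam' D' (ψ u) (ψ w)) ∧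
        (∀ g : G, ψ (g, 0) = (g, 0)) ∧
        (∀ u : G × k, (ψ u).2 = u.2)) ↔
      (lam = lam' ∧ ∃ g₀ : G,
        ∀ h : G, D h - D' h = ⁅g₀, h⁆ - lam h • g₀) := by
  have stab_costab_iff (ψ : (G × k) ≃ₗ[k] G × k) :
      ((∀ g : G, ψ (g, 0) = (g, 0)) ∧ ∀ u : G × k, (ψ u).2 = u.2) ↔ ∃ r : G, ψ = shear r := by
    simpa [LinearEquiv.toLinearMap_inj] using (exists_eq_shear_iff (ψ : G × k →ₗ[k] G × k)).symm
  simp only [stab_costab_iff, ← exists_and_left, ← shear_map_twDerBracket_iff]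
  constructor
  · rintro ⟨_, r, map_bracket, rfl⟩
    exact ⟨r, map_bracket⟩
  · rintro ⟨r, map_bracket⟩
    exact ⟨shear r, r, map_bracket, rfl⟩

/-- Theorem 4.6(3): there is a Lie algebra isomorphism
`G ⋈_{(λ,D)} k → G ⋈_{(λ',D')} k` stabilizing `G` and co-stabilizing `k` iff
`λ = λ'` and `D - D'` is an inner twisted derivation. -/
theorem twDer_iso_stab_costab_iff {k G : Type*} [Field k] [LieRing G] [LieAlgebra k G]
    (lam lam' : G →ₗ[k] k) (D D' : G →ₗ[k] G)
    (hlam : ∀ g h : G, lam ⁅g, h⁆ = 0)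
    (hD : ∀ g h : G, D ⁅g, h⁆ = ⁅D g, h⁆ + ⁅g, D h⁆ + lam g • D h - lam h • D g)
    (hlam' : ∀ g h : G, lam' ⁅g, h⁆ = 0)
    (hD' : ∀ g h : G, D' ⁅g, h⁆ = ⁅D' g, h⁆ + ⁅g, D' h⁆ + lam' g • D' h - lam' h • D' g) :
    (∃ ψ : (G × k) ≃ₗ[k] G × k,
        (∀ u w : G × k, ψ (twDerBracket lam D u w) =
          twDerBracket lam' D' (ψ u) (ψ w)) ∧
        (∀ g : G, ψ (g, 0) = (g, 0)) ∧
        (∀ u : G × k, (ψ u).2 = u.2)) ↔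
      (lam = lam' ∧ ∃ g₀ : G,
        ∀ h : G, D h - D' h = ⁅g₀, h⁆ - lam h • g₀) :=
  twDer_iso_stab_costab_iff_general lam lam' D D'
end

section
/- Let k be a field and g a perfect Lie algebra over k. For derivations D, D' of g, denote by g ⋈_D k and g ⋈_{D'} k the Lie algebras on g × k with bracket [(g,a),(h,b)] = ([g,h] + a·D(h) − b·D(g), 0) (respectively with D'). Then: (1) there exists a Lie algebra isomorphism g ⋈_D k → g ⋈_{D'} k stabilizing g (mapping (g,0) to (g,0)) if and only if there exists a nonzero scalar q ∈ k such that D − q·D' is an inner derivation of g (i.e. of the form [g₀, −] for some g₀ ∈ g); (2) there exists such an isomorphism which in addition co-stabilizes k (second component of the image of (g,a) is a) if and only if D − D' is an inner derivation of g. -/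
/-- The bracket of `G ⋈_D k` on `G × k` for a derivation `D` of `G`:
`[(g,a),(h,b)] = ([g,h] + a·D(h) - b·D(g), 0)`. -/
def derBracket {k G : Type*} [Field k] [LieRing G] [LieAlgebra k G]
    (D : G →ₗ[k] G) : G × k → G × k → G × k :=
  fun u w => (⁅u.1, w.1⁆ + u.2 • D w.1 - w.2 • D u.1, 0)

/-!
A linear automorphism `ψ` of `G × k` fixing `G` pointwise is determined by `ψ (0, 1) = (g₀, q)`, so
it is the map `(g, a) ↦ (g + a g₀, q a)` with `q` invertible. Comparing `ψ [(0, 1), (h, 0)]_D` with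
`[(g₀, q), (h, 0)]_{D'}` shows that `ψ` preserves brackets exactly when `D h = [g₀, h] + q D' h` for
all `h`.
-/

section Shear

variable {R M : Type*} [CommRing R] [AddCommGroup M] [Module R M]

/-- The linear automorphism `(m, a) ↦ (m + a m₀, q a)` of `M × R`. These are the automorphisms
fixing `M` pointwise, see `forall_apply_inl_iff_exists_eq_shearEquiv`. -/
def shearEquiv (q : Rˣ) (m₀ : M) : (M × R) ≃ₗ[R] M × R :=
  LinearEquiv.prodComm R M R ≪≫ₗ
    (LinearEquiv.smulOfUnit q).skewProd (.refl R M) (.toSpanSingleton R M m₀) ≪≫ₗ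
    LinearEquiv.prodComm R R M

theorem shearEquiv_apply (q : Rˣ) (m₀ : M) (u : M × R) :
    shearEquiv q m₀ u = (u.1 + u.2 • m₀, q * u.2) :=
  rfl

theorem apply_eq_of_forall_apply_inl {ψ : M × R →ₗ[R] M × R} (hψ : ∀ m : M, ψ (m, 0) = (m, 0))
    (u : M × R) : ψ u = (u.1 + u.2 • (ψ (0, 1)).1, (ψ (0, 1)).2 * u.2) := by
  have decomp : u = (u.1, 0) + u.2 • (0, 1) := by ext <;> simp
  calc ψ u = ψ (u.1, 0) + u.2 • ψ (0, 1) := by rw [← map_smul, ← map_add, ← decomp]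
    _ = (u.1 + u.2 • (ψ (0, 1)).1, (ψ (0, 1)).2 * u.2) := by
      rw [hψ]
      ext <;> simp [mul_comm]

theorem isUnit_snd_apply_of_forall_apply_inl {ψ : (M × R) ≃ₗ[R] M × R}
    (hψ : ∀ m : M, ψ (m, 0) = (m, 0)) : IsUnit (ψ (0, 1)).2 := by
  obtain ⟨u, hu⟩ := ψ.surjective (0, 1)
  have hmul : (ψ (0, 1)).2 * u.2 = 1 := by
    have hsnd := congrArg Prod.snd (apply_eq_of_forall_apply_inl (ψ := ψ.toLinearMap) hψ u)
    simpa [hu] using hsnd.symm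
  exact .of_mul_eq_one _ hmul

theorem forall_apply_inl_iff_exists_eq_shearEquiv {ψ : (M × R) ≃ₗ[R] M × R} :
    (∀ m : M, ψ (m, 0) = (m, 0)) ↔ ∃ (q : Rˣ) (m₀ : M), ψ = shearEquiv q m₀ := by
  constructor
  · intro hψ
    obtain ⟨q, hq⟩ := isUnit_snd_apply_of_forall_apply_inl hψ
    refine ⟨q, (ψ (0, 1)).1, LinearEquiv.ext fun u ↦ ?_⟩
    rw [shearEquiv_apply, hq]
    exact apply_eq_of_forall_apply_inl (ψ := ψ.toLinearMap) hψ u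
  · rintro ⟨q, m₀, rfl⟩ m
    simp [shearEquiv_apply]

theorem forall_snd_shearEquiv_apply_eq_iff {q : Rˣ} {m₀ : M} :
    (∀ u : M × R, (shearEquiv q m₀ u).2 = u.2) ↔ q = 1 := by
  constructor
  · intro h
    simpa [shearEquiv_apply] using h (0, 1)
  · rintro rfl u
    simp [shearEquiv_apply]

end Shear

section Derivation

variable {R L : Type*} [CommRing R] [LieRing L] [LieAlgebra R L]

/-- The bundled derivation of a linear endomorphism satisfying the Leibniz rule in the form
`D [x, y] = [D x, y] + [x, D y]`. -/
def derivationOfLeibniz (D : L →ₗ[R] L) (hD : ∀ x y : L, D ⁅x, y⁆ = ⁅D x, y⁆ + ⁅x, D y⁆) :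
    LieDerivation R L L where
  toLinearMap := D
  leibniz' x y := by rw [hD, ← lie_skew y, sub_neg_eq_add, add_comm]

@[simp]
theorem coe_derivationOfLeibniz (D : L →ₗ[R] L)
    (hD : ∀ x y : L, D ⁅x, y⁆ = ⁅D x, y⁆ + ⁅x, D y⁆) :
    (derivationOfLeibniz D hD : L →ₗ[R] L) = D :=
  rfl

@[simp]
theorem derivationOfLeibniz_apply (D : L →ₗ[R] L)
    (hD : ∀ x y : L, D ⁅x, y⁆ = ⁅D x, y⁆ + ⁅x, D y⁆) (x : L) :
    derivationOfLeibniz D hD x = D x :=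
  rfl

theorem mem_range_ad_iff {D : LieDerivation R L L} :
    D ∈ (LieDerivation.ad R L).range ↔ ∃ x : L, ∀ y : L, D y = ⁅x, y⁆ := by
  simp [LieHom.mem_range, LieDerivation.ext_iff, eq_comm]

end Derivation

section Bracket

variable {k G : Type*} [Field k] [LieRing G] [LieAlgebra k G]

theorem shearEquiv_map_derBracket_iff {D D' : G →ₗ[k] G} {q : kˣ} {g₀ : G} :
    (∀ u w : G × k, shearEquiv q g₀ (derBracket D u w) =
        derBracket D' (shearEquiv q g₀ u) (shearEquiv q g₀ w)) ↔
      ∀ h : G, D h - (q : k) • D' h = ⁅g₀, h⁆ := by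
  constructor
  · intro hbracket h
    have hD : D h = ⁅g₀, h⁆ + (q : k) • D' h := by
      simpa [shearEquiv_apply, derBracket] using congrArg Prod.fst (hbracket (0, 1) (h, 0))
    rw [hD, add_sub_cancel_right]
  · intro hinner u w
    have hD (x : G) : D x = ⁅g₀, x⁆ + (q : k) • D' x := sub_eq_iff_eq_add.mp (hinner x)
    have hskew : ⁅u.1, g₀⁆ = -⁅g₀, u.1⁆ := (lie_skew _ _).symm
    ext
    · simp only [shearEquiv_apply, derBracket, hD, hskew, lie_add, add_lie, lie_smul, smul_lie,
        lie_self, map_add, map_smul]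
      module
    · simp [shearEquiv_apply, derBracket]

theorem der_iso_stab_iff_perfect_general (D D' : LieDerivation k G G) :
    ((∃ ψ : (G × k) ≃ₗ[k] G × k,
        (∀ u w : G × k, ψ (derBracket D u w) = derBracket D' (ψ u) (ψ w)) ∧
        ∀ g : G, ψ (g, 0) = (g, 0)) ↔
      ∃ q : k, q ≠ 0 ∧ D - q • D' ∈ (LieDerivation.ad k G).range) ∧
    ((∃ ψ : (G × k) ≃ₗ[k] G × k,
        (∀ u w : G × k, ψ (derBracket D u w) = derBracket D' (ψ u) (ψ w)) ∧
        (∀ g : G, ψ (g, 0) = (g, 0)) ∧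
        (∀ u : G × k, (ψ u).2 = u.2)) ↔
      D - D' ∈ (LieDerivation.ad k G).range) := by
  simp only [forall_apply_inl_iff_exists_eq_shearEquiv, mem_range_ad_iff]
  refine ⟨⟨?_, ?_⟩, ⟨?_, ?_⟩⟩
  · rintro ⟨_, hbracket, q, g₀, rfl⟩
    exact ⟨q, q.ne_zero, g₀, shearEquiv_map_derBracket_iff.mp hbracket⟩
  · rintro ⟨q, hq, g₀, hinner⟩
    exact ⟨_, shearEquiv_map_derBracket_iff (q := .mk0 q hq).mpr hinner, _, g₀, rfl⟩
  · rintro ⟨_, hbracket, ⟨q, g₀, rfl⟩, hsnd⟩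
    obtain rfl := forall_snd_shearEquiv_apply_eq_iff.mp hsnd
    exact ⟨g₀, by simpa using shearEquiv_map_derBracket_iff.mp hbracket⟩
  · rintro ⟨g₀, hinner⟩
    exact ⟨_, shearEquiv_map_derBracket_iff.mpr (by simpa using hinner), ⟨1, g₀, rfl⟩,
      forall_snd_shearEquiv_apply_eq_iff.mpr rfl⟩

end Bracket

/-- Corollary 4.7: for a perfect Lie algebra `G` and derivations `D, D'`,
(1) `G ⋈_D k ≅ G ⋈_{D'} k` via an isomorphism stabilizing `G` iff `D - q·D'` is
inner for some `q ∈ k*`; (2) via an isomorphism also co-stabilizing `k` iff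
`D - D'` is inner. -/
theorem der_iso_stab_iff_perfect {k G : Type*} [Field k] [LieRing G] [LieAlgebra k G]
    (hperf : LieAlgebra.derivedSeries k G 1 = ⊤)
    (D D' : G →ₗ[k] G)
    (hD : ∀ g h : G, D ⁅g, h⁆ = ⁅D g, h⁆ + ⁅g, D h⁆)
    (hD' : ∀ g h : G, D' ⁅g, h⁆ = ⁅D' g, h⁆ + ⁅g, D' h⁆) :
    ((∃ ψ : (G × k) ≃ₗ[k] G × k,
        (∀ u w : G × k, ψ (derBracket D u w) = derBracket D' (ψ u) (ψ w)) ∧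
        ∀ g : G, ψ (g, 0) = (g, 0)) ↔
      ∃ (q : k) (g₀ : G), q ≠ 0 ∧ ∀ h : G, D h - q • D' h = ⁅g₀, h⁆) ∧
    ((∃ ψ : (G × k) ≃ₗ[k] G × k,
        (∀ u w : G × k, ψ (derBracket D u w) = derBracket D' (ψ u) (ψ w)) ∧
        (∀ g : G, ψ (g, 0) = (g, 0)) ∧
        (∀ u : G × k, (ψ u).2 = u.2)) ↔
      ∃ g₀ : G, ∀ h : G, D h - D' h = ⁅g₀, h⁆) := by
  simpa [mem_range_ad_iff, -LieHom.mem_range] using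
    der_iso_stab_iff_perfect_general (derivationOfLeibniz D hD) (derivationOfLeibniz D' hD')
end

section
/- Let k be a field, g a perfect Lie algebra over k such that every derivation of g is inner (Der(g) = Inn(g)), and let E be a Lie algebra over k containing g as a Lie subalgebra of codimension 1. Then there exists an isomorphism of Lie algebras from E to the direct product g × k (the Lie algebra on g × k with bracket [(g,a),(h,b)] = ([g,h], 0), where k carries the 1-dimensional abelian Lie algebra structure) which stabilizes g, i.e. acts as the identity on g. -/
/-!
Let `p : E → k` be the projection with kernel `G`. Since `G` acts on the one-dimensional space
`E / G` through a character and a perfect Lie algebra has no nonzero characters, `G` is an ideal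
of `E`. Any `e` with `p e = 1` therefore induces a derivation of `G`, which is `[g₀, -]` for some
`g₀`; then `e - g₀` still satisfies `p (e - g₀) = 1`, and it commutes with `G`, so it spans a direct
factor complementary to `G`.
-/

open Function

attribute [local instance] LieRing.ofAssociativeRing

theorem lie_prod_commRing {R G : Type*} [CommRing R] [LieRing G] (x y : G × R) :
    ⁅x, y⁆ = (⁅x.1, y.1⁆, 0) := by
  simp [LieRing.of_associative_ring_bracket, mul_comm]

section CommRing

variable {R G H E : Type*} [CommRing R] [LieRing G] [LieAlgebra R G] [LieRing H] [LieAlgebra R H]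
  [LieRing E] [LieAlgebra R E]

theorem lieDerivation_ad_surjective_of_forall_leibniz
    (hinner : ∀ D : G →ₗ[R] G, (∀ g h : G, D ⁅g, h⁆ = ⁅D g, h⁆ + ⁅g, D h⁆) →
      ∃ g₀ : G, ∀ h : G, D h = ⁅g₀, h⁆) :
    Surjective (LieDerivation.ad R G) := by
  intro D
  obtain ⟨g₀, hg₀⟩ := hinner D fun g h ↦ (D.apply_lie_eq_add g h).trans (add_comm _ _)
  exact ⟨g₀, LieDerivation.ext fun h ↦ by simpa using (hg₀ h).symm⟩

section Action

variable {ι : G →ₗ⁅R⁆ E} {p : E →ₗ[R] R} {e : E}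

theorem map_lie_eq_mul_map_lie_of_exact (hexact : Exact ι p) (he : p e = 1) (x : G) (z : E) :
    p ⁅ι x, z⁆ = p z * p ⁅ι x, e⁆ := by
  obtain ⟨a, ha⟩ : ∃ a, ι a = z - p z • e := (hexact _).mp (by simp [he])
  have hz : z = ι a + p z • e := by rw [ha, sub_add_cancel]
  calc
    p ⁅ι x, z⁆ = p ⁅ι x, ι a + p z • e⁆ := by rw [← hz]
    _ = p (ι ⁅x, a⁆) + p z * p ⁅ι x, e⁆ := by simp
    _ = p z * p ⁅ι x, e⁆ := by rw [hexact.apply_apply_eq_zero, zero_add]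

/-- The character through which `G` acts on the rank-one quotient `E / ι(G)`. The quotient is
encoded by a functional `p` with kernel `ι(G)`, and `e` is a lift of its generator. -/
def quotientCharacter (hexact : Exact ι p) (he : p e = 1) : LieAlgebra.LieCharacter R G where
  toLinearMap := p ∘ₗ (LieModule.toEnd R E E : E →ₗ[R] Module.End R E).flip e ∘ₗ (ι : G →ₗ[R] E)
  map_lie' {x y} := by
    change p ⁅ι ⁅x, y⁆, e⁆ = ⁅p ⁅ι x, e⁆, p ⁅ι y, e⁆⁆
    rw [LieHom.map_lie, lie_lie, map_sub, map_lie_eq_mul_map_lie_of_exact hexact he x ⁅ι y, e⁆,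
      map_lie_eq_mul_map_lie_of_exact hexact he y ⁅ι x, e⁆, LieRing.of_associative_ring_bracket]
    ring

theorem quotientCharacter_apply (hexact : Exact ι p) (he : p e = 1) (x : G) :
    quotientCharacter hexact he x = p ⁅ι x, e⁆ :=
  rfl

theorem map_lie_eq_zero_of_mem_derivedSeries (hexact : Exact ι p) (hp : Surjective p) {x : G}
    (hx : x ∈ LieAlgebra.derivedSeries R G 1) (z : E) : p ⁅ι x, z⁆ = 0 := by
  obtain ⟨e, he⟩ := hp 1
  rw [map_lie_eq_mul_map_lie_of_exact hexact he, ← quotientCharacter_apply hexact he,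
    LieAlgebra.lieCharacter_apply_of_mem_derived _ hx, mul_zero]

end Action

theorem exists_lieDerivation_restrict {ι : G →ₗ⁅R⁆ E} (hι : Injective ι) (D : LieDerivation R E E)
    (hD : ∀ x, D (ι x) ∈ Set.range ι) :
    ∃ D' : LieDerivation R G G, ∀ x, ι (D' x) = D (ι x) := by
  let f : G →ₗ[R] G :=
    LinearMap.codRestrictOfInjective ((D : E →ₗ[R] E) ∘ₗ (ι : G →ₗ[R] E)) (ι : G →ₗ[R] E) hι hD
  have hf (x : G) : ι (f x) = D (ι x) := LinearMap.codRestrictOfInjective_comp_apply _ _ hι hD x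
  exact ⟨⟨f, fun x y ↦ hι <| by simp [hf]⟩, hf⟩

theorem exists_forall_lie_sub_map_eq_zero {ι : G →ₗ⁅R⁆ E} (hι : Injective ι)
    (had : Surjective (LieDerivation.ad R G)) {e : E} (he : ∀ x, ⁅e, ι x⁆ ∈ Set.range ι) :
    ∃ g₀ : G, ∀ x, ⁅ι x, e - ι g₀⁆ = 0 := by
  obtain ⟨D, hD⟩ := exists_lieDerivation_restrict hι (LieDerivation.ad R E e) (by simpa using he)
  obtain ⟨g₀, rfl⟩ := had D
  refine ⟨g₀, fun x ↦ ?_⟩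
  have hx : ⁅ι g₀, ι x⁆ = ⁅e, ι x⁆ := by simpa using hD x
  rw [← lie_skew, sub_lie, hx, sub_self, neg_zero]

variable (R) in
/-- The inclusion of the line through `e`, as a homomorphism from the abelian Lie algebra `R`
(whose bracket is the commutator of the commutative ring `R`). -/
def lineLieHom (e : E) : R →ₗ⁅R⁆ E where
  toLinearMap := LinearMap.toSpanSingleton R E e
  map_lie' := by simp [LieRing.of_associative_ring_bracket, mul_comm]

@[simp]
theorem lineLieHom_apply (e : E) (c : R) : lineLieHom R e c = c • e :=
  rfl

/-- The homomorphism `(a, b) ↦ f a + g b` out of a direct product of Lie algebras, for `f` and `g`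
with commuting images. -/
def coprodOfCommute (f : G →ₗ⁅R⁆ E) (g : H →ₗ⁅R⁆ E) (hcomm : ∀ a b, ⁅f a, g b⁆ = 0) :
    G × H →ₗ⁅R⁆ E where
  toLinearMap := (f : G →ₗ[R] E).coprod (g : H →ₗ[R] E)
  map_lie' {x y} := by
    have hcomm' (a : G) (b : H) : ⁅g b, f a⁆ = 0 := by rw [← lie_skew, hcomm, neg_zero]
    simp [hcomm, hcomm']

@[simp]
theorem coprodOfCommute_apply (f : G →ₗ⁅R⁆ E) (g : H →ₗ⁅R⁆ E) (hcomm : ∀ a b, ⁅f a, g b⁆ = 0)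
    (x : G × H) : coprodOfCommute f g hcomm x = f x.1 + g x.2 :=
  rfl

theorem exists_lieEquiv_prod_of_commuting_section {ι : G →ₗ⁅R⁆ E} (hι : Injective ι) {p : E →ₗ[R] H}
    (hexact : Exact ι p) (s : H →ₗ⁅R⁆ E) (hs : ∀ b, p (s b) = b)
    (hcomm : ∀ a b, ⁅ι a, s b⁆ = 0) :
    ∃ ψ : E ≃ₗ⁅R⁆ G × H, ∀ a, ψ (ι a) = (a, 0) := by
  let splitting : E ≃ₗ[R] G × H :=
    (hexact.splitSurjectiveEquiv (f := (ι : G →ₗ[R] E)) hι ⟨s, LinearMap.ext hs⟩).1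
  have hbij : Bijective (coprodOfCommute ι s hcomm) := splitting.symm.bijective
  refine ⟨(LieEquiv.ofBijective _ hbij).symm, fun a ↦ ?_⟩
  rw [LieEquiv.symm_apply_eq]
  simp

theorem codim_one_extension_of_perfect_inner_general
    (hperf : LieAlgebra.derivedSeries R G 1 = ⊤) (had : Surjective (LieDerivation.ad R G))
    {ι : G →ₗ⁅R⁆ E} (hι : Injective ι) {p : E →ₗ[R] R} (hexact : Exact ι p) (hp : Surjective p) :
    ∃ ψ : E ≃ₗ⁅R⁆ G × R, ∀ a, ψ (ι a) = (a, 0) := by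
  obtain ⟨e, he⟩ := hp 1
  have hideal (x : G) : ⁅e, ι x⁆ ∈ Set.range ι := by
    rw [← hexact, ← lie_skew, map_neg, neg_eq_zero]
    exact map_lie_eq_zero_of_mem_derivedSeries hexact hp (hperf ▸ LieSubmodule.mem_top x) e
  obtain ⟨g₀, hcentral⟩ := exists_forall_lie_sub_map_eq_zero hι had hideal
  have hsection : p (e - ι g₀) = 1 := by
    rw [map_sub, he, hexact.apply_apply_eq_zero, sub_zero]
  exact exists_lieEquiv_prod_of_commuting_section hι hexact (lineLieHom R (e - ι g₀))
    (fun c ↦ by simp [hsection]) (fun a c ↦ by simp [hcentral])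

end CommRing

theorem exists_exact_surjective_of_notMem_range {K V W : Type*} [DivisionRing K] [AddCommGroup V]
    [Module K V] [AddCommGroup W] [Module K W] {f : V →ₗ[K] W} {e : W} (he : e ∉ Set.range f)
    (hcodim : ∀ z, ∃ (a : V) (c : K), z = f a + c • e) :
    ∃ p : W →ₗ[K] K, Exact f p ∧ Surjective p := by
  obtain ⟨p, hpe, hle⟩ := Submodule.exists_le_ker_of_notMem (p := LinearMap.range f) he
  have hpf (a : V) : p (f a) = 0 := hle ⟨a, rfl⟩
  refine ⟨p, fun z ↦ ⟨fun hz ↦ ?_, ?_⟩, LinearMap.surjective (ne_of_apply_ne (· e) hpe)⟩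
  · obtain ⟨a, c, rfl⟩ := hcodim z
    have hc : c = 0 := by simpa [hpf, hpe] using hz
    exact ⟨a, by simp [hc]⟩
  · rintro ⟨a, rfl⟩
    exact hpf a

/-- Corollary 4.8: if `G` is a perfect Lie algebra all of whose derivations are inner,
and `E` is a Lie algebra containing `G` as a Lie subalgebra of codimension 1, then
`E` is isomorphic, via an isomorphism stabilizing `G`, to the direct product
`G × k` with bracket `[(g,a),(h,b)] = ([g,h], 0)`. -/
theorem codim_one_extension_of_perfect_inner {k G E : Type*} [Field k]
    [LieRing G] [LieAlgebra k G] [LieRing E] [LieAlgebra k E]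
    (hperf : LieAlgebra.derivedSeries k G 1 = ⊤)
    (hinner : ∀ D : G →ₗ[k] G, (∀ g h : G, D ⁅g, h⁆ = ⁅D g, h⁆ + ⁅g, D h⁆) →
      ∃ g₀ : G, ∀ h : G, D h = ⁅g₀, h⁆)
    (ι : G →ₗ⁅k⁆ E) (hι : Function.Injective ι)
    (e : E) (he : e ∉ Set.range ι)
    (hcodim : ∀ z : E, ∃ (a : G) (c : k), z = ι a + c • e) :
    ∃ ψ : E ≃ₗ[k] G × k,
      (∀ z w : E, ψ ⁅z, w⁆ = (⁅(ψ z).1, (ψ w).1⁆, 0)) ∧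
      ∀ a : G, ψ (ι a) = (a, 0) := by
  obtain ⟨p, hexact, hp⟩ :=
    exists_exact_surjective_of_notMem_range (f := (ι : G →ₗ[k] E)) he hcodim
  obtain ⟨ψ, hψ⟩ := codim_one_extension_of_perfect_inner_general hperf
    (lieDerivation_ad_surjective_of_forall_leibniz hinner) hι hexact hp
  exact ⟨ψ.toLinearEquiv, fun z w ↦ (ψ.map_lie z w).trans (lie_prod_commRing _ _), hψ⟩
end
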